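/- Let S be a quasi-hereditary algebra and λ ∈ Λ⁺. The least length d of a tilting resolution of the costandard module ∇(λ), i.e. of an exact sequence 0 → T_d → ⋯ → T_1 → T_0 → ∇(λ) → 0 with every T_i a tilting module, equals the Δ-filtration dimension wfd(∇(λ)). -/

import Mathlib

/-!
Common definitions for formalizing "On the global and ∇-filtration dimensions of
quasi-hereditary algebras" by Erdmann and Parker.

We work with a finite-dimensional algebra `S` over a field `k`; since `S` is
finite dimensional over `k`, the finite-dimensional `S`-modules are exactly the
finitely generated ones, so we express finite-dimensionality of a module `M` as
`Module.Finite S M`.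
-/

open CategoryTheory

namespace QHPaper

variable (S : Type) [Ring S]

/-- The subquotient `B ⧸ A` associated to two submodules `A B` of `M`. -/
abbrev subquot {M : ModuleCat.{0} S} (A B : Submodule S ↥M) : Type :=
  ↥B ⧸ (Submodule.comap B.subtype A)

/-- A filtration `⊥ = f 0 ≤ f 1 ≤ ⋯ ≤ f n = ⊤` of `M` whose `i`-th section
`f (i+1) / f i` is isomorphic to the prescribed module `D i`. -/
def HasFiltrationWithSections (M : ModuleCat.{0} S) (n : ℕ)
    (f : Fin (n + 1) → Submodule S ↥M) (D : Fin n → ModuleCat.{0} S) : Prop :=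
  Monotone f ∧ f 0 = ⊥ ∧ f (Fin.last n) = ⊤ ∧
    ∀ i : Fin n, Nonempty ((subquot S (f i.castSucc) (f i.succ)) ≃ₗ[S] ↥(D i))

/-- `L` occurs as a (simple) subquotient of `M`; for `L` simple this says that `L`
is a composition factor of `M`. -/
def IsCompFactor (L M : ModuleCat.{0} S) : Prop :=
  ∃ (A B : Submodule S ↥M), A ≤ B ∧ Nonempty ((subquot S A B) ≃ₗ[S] ↥L)

/-- `L` occurs with multiplicity `m` among the sections of a composition series of `M`. -/
def CompFactorMult (L M : ModuleCat.{0} S) (m : ℕ) : Prop :=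
  ∃ (n : ℕ) (f : Fin (n + 1) → Submodule S ↥M),
    Monotone f ∧ f 0 = ⊥ ∧ f (Fin.last n) = ⊤ ∧
    (∀ i : Fin n, IsSimpleModule S (subquot S (f i.castSucc) (f i.succ))) ∧
    Nat.card {i : Fin n // Nonempty ((subquot S (f i.castSucc) (f i.succ)) ≃ₗ[S] ↥L)} = m

/-- `P` is a projective cover of `M`: `P` is projective and there is a surjection
`P → M` whose kernel is superfluous in `P`. -/
def IsProjCover (P M : ModuleCat.{0} S) : Prop :=
  Module.Projective S ↥P ∧ ∃ π : ↥P →ₗ[S] ↥M, Function.Surjective π ∧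
    ∀ N : Submodule S ↥P, N ⊔ LinearMap.ker π = ⊤ → N = ⊤

/-- `I` is an injective hull of `M`: `I` is injective and there is an injection
`M → I` with essential image. -/
def IsInjHull (I M : ModuleCat.{0} S) : Prop :=
  Module.Injective S ↥I ∧ ∃ ι : ↥M →ₗ[S] ↥I, Function.Injective ι ∧
    ∀ N : Submodule S ↥I, N ⊓ LinearMap.range ι = ⊥ → N = ⊥

/-- The data of a quasi-hereditary algebra structure on `S` with weight poset `Λ`:
a full set `L` of pairwise non-isomorphic simple modules, their projective covers `P`
and injective hulls `I`, the standard modules `std` (largest quotient of `P lam` with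
all composition factors `L mu`, `mu ≤ lam`), the costandard modules `costd`
(largest submodule of `I lam` with all composition factors `L mu`, `mu ≤ lam`),
such that `L lam` occurs exactly once in `std lam` and `P lam` is filtered by
standard modules `std mu` with `mu ≥ lam`, with `std lam` occurring exactly once. -/
structure QHData (Λ : Type) [Fintype Λ] [PartialOrder Λ] where
  L : Λ → ModuleCat.{0} S
  P : Λ → ModuleCat.{0} S
  I : Λ → ModuleCat.{0} S
  std : Λ → ModuleCat.{0} S
  costd : Λ → ModuleCat.{0} S
  finiteL : ∀ lam, Module.Finite S ↥(L lam)
  simpleL : ∀ lam, IsSimpleModule S ↥(L lam)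
  nonisoL : ∀ lam mu, lam ≠ mu → IsEmpty (↥(L lam) ≃ₗ[S] ↥(L mu))
  fullL : ∀ M : ModuleCat.{0} S, IsSimpleModule S ↥M → ∃ lam, Nonempty (↥M ≃ₗ[S] ↥(L lam))
  projCover : ∀ lam, IsProjCover S (P lam) (L lam)
  injHull : ∀ lam, IsInjHull S (I lam) (L lam)
  stdSpec : ∀ lam, ∃ K : Submodule S ↥(P lam),
    Nonempty (↥(std lam) ≃ₗ[S] (↥(P lam) ⧸ K)) ∧
    (∀ mu, IsCompFactor S (L mu) (ModuleCat.of S (↥(P lam) ⧸ K)) → mu ≤ lam) ∧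
    ∀ K' : Submodule S ↥(P lam),
      (∀ mu, IsCompFactor S (L mu) (ModuleCat.of S (↥(P lam) ⧸ K')) → mu ≤ lam) → K ≤ K'
  costdSpec : ∀ lam, ∃ V : Submodule S ↥(I lam),
    Nonempty (↥(costd lam) ≃ₗ[S] ↥V) ∧
    (∀ mu, IsCompFactor S (L mu) (ModuleCat.of S ↥V) → mu ≤ lam) ∧
    ∀ V' : Submodule S ↥(I lam),
      (∀ mu, IsCompFactor S (L mu) (ModuleCat.of S ↥V') → mu ≤ lam) → V' ≤ V
  multOne : ∀ lam, CompFactorMult S (L lam) (std lam) 1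
  projFilt : ∀ lam, ∃ (n : ℕ) (f : Fin (n + 1) → Submodule S ↥(P lam)) (g : Fin n → Λ),
    HasFiltrationWithSections S (P lam) n f (fun i => std (g i)) ∧
    (∀ i, lam ≤ g i) ∧ Nat.card {i : Fin n // g i = lam} = 1

variable {Λ : Type} [Fintype Λ] [PartialOrder Λ]

/-- `M` has a filtration with costandard sections, i.e. `M ∈ F(∇)`. -/
def InCostdFilt (Q : QHData S Λ) (M : ModuleCat.{0} S) : Prop :=
  ∃ (n : ℕ) (f : Fin (n + 1) → Submodule S ↥M) (g : Fin n → Λ),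
    HasFiltrationWithSections S M n f (fun i => Q.costd (g i))

/-- `M` has a filtration with standard sections, i.e. `M ∈ F(Δ)`. -/
def InStdFilt (Q : QHData S Λ) (M : ModuleCat.{0} S) : Prop :=
  ∃ (n : ℕ) (f : Fin (n + 1) → Submodule S ↥M) (g : Fin n → Λ),
    HasFiltrationWithSections S M n f (fun i => Q.std (g i))

/-- `0 → N 0 → N 1 → ⋯ → N (n+1) → 0` is exact. -/
def IsExactSeq (n : ℕ) (N : Fin (n + 2) → ModuleCat.{0} S)
    (f : ∀ i : Fin (n + 1), ↥(N i.castSucc) →ₗ[S] ↥(N i.succ)) : Prop :=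
  Function.Injective (f 0) ∧ Function.Surjective (f (Fin.last n)) ∧
    ∀ i : Fin n, LinearMap.range (f i.castSucc) = LinearMap.ker (f i.succ)

/-- `M` has a ∇-resolution (co-resolution by modules in `F(∇)`) of length `d`:
`0 → M → M₀ → ⋯ → M_d → 0` with each `Mᵢ ∈ F(∇)`. -/
def GfdLE (Q : QHData S Λ) (M : ModuleCat.{0} S) (d : ℕ) : Prop :=
  ∃ (N : Fin (d + 2) → ModuleCat.{0} S)
    (f : ∀ i : Fin (d + 1), ↥(N i.castSucc) →ₗ[S] ↥(N i.succ)),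
    IsExactSeq S d N f ∧ N 0 = M ∧ ∀ i : Fin (d + 1), InCostdFilt S Q (N i.succ)

/-- The ∇-filtration dimension (good filtration dimension) of a module. -/
noncomputable def gfd (Q : QHData S Λ) (M : ModuleCat.{0} S) : ℕ :=
  sInf {d | GfdLE S Q M d}

/-- `M` has a resolution `0 → M_d → ⋯ → M₀ → M → 0` with each `Mᵢ ∈ F(Δ)`. -/
def WfdLE (Q : QHData S Λ) (M : ModuleCat.{0} S) (d : ℕ) : Prop :=
  ∃ (N : Fin (d + 2) → ModuleCat.{0} S)
    (f : ∀ i : Fin (d + 1), ↥(N i.castSucc) →ₗ[S] ↥(N i.succ)),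
    IsExactSeq S d N f ∧ N (Fin.last (d + 1)) = M ∧
    ∀ i : Fin (d + 1), InStdFilt S Q (N i.castSucc)

/-- The Δ-filtration dimension of a module. -/
noncomputable def wfd (Q : QHData S Λ) (M : ModuleCat.{0} S) : ℕ :=
  sInf {d | WfdLE S Q M d}

/-- `M` has a projective resolution of length `d`. -/
def ProjdimLE (M : ModuleCat.{0} S) (d : ℕ) : Prop :=
  ∃ (N : Fin (d + 2) → ModuleCat.{0} S)
    (f : ∀ i : Fin (d + 1), ↥(N i.castSucc) →ₗ[S] ↥(N i.succ)),
    IsExactSeq S d N f ∧ N (Fin.last (d + 1)) = M ∧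
    ∀ i : Fin (d + 1), Module.Projective S ↥(N i.castSucc)

/-- The projective dimension of a module. -/
noncomputable def projdim (M : ModuleCat.{0} S) : ℕ :=
  sInf {d | ProjdimLE S M d}

/-- `M` has an injective resolution of length `d`. -/
def InjdimLE (M : ModuleCat.{0} S) (d : ℕ) : Prop :=
  ∃ (N : Fin (d + 2) → ModuleCat.{0} S)
    (f : ∀ i : Fin (d + 1), ↥(N i.castSucc) →ₗ[S] ↥(N i.succ)),
    IsExactSeq S d N f ∧ N 0 = M ∧
    ∀ i : Fin (d + 1), Module.Injective S ↥(N i.succ)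

/-- The injective dimension of a module. -/
noncomputable def injdim (M : ModuleCat.{0} S) : ℕ :=
  sInf {d | InjdimLE S M d}

/-- `gfd(S)`: the supremum of the ∇-filtration dimensions of all
finite-dimensional `S`-modules. -/
noncomputable def gfdAlg (Q : QHData S Λ) : ℕ :=
  sSup {d | ∃ M : ModuleCat.{0} S, Module.Finite S ↥M ∧ gfd S Q M = d}

/-- `wfd(S)`: the supremum of the Δ-filtration dimensions of all
finite-dimensional `S`-modules. -/
noncomputable def wfdAlg (Q : QHData S Λ) : ℕ :=
  sSup {d | ∃ M : ModuleCat.{0} S, Module.Finite S ↥M ∧ wfd S Q M = d}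

/-- The global dimension of `S`: the supremum of the projective dimensions of all
finite-dimensional `S`-modules. -/
noncomputable def globdim : ℕ :=
  sSup {d | ∃ M : ModuleCat.{0} S, Module.Finite S ↥M ∧ projdim S M = d}

/-- `Ext^n_S(A, B) ≠ 0`. -/
noncomputable def extNe (A B : ModuleCat.{0} S) (n : ℕ) : Prop :=
  Nontrivial ↥(((Ext ℤ (ModuleCat.{0} S) n).obj (Opposite.op A)).obj B)

/-- A simple-preserving duality on `S`: a contravariant, exact, fully faithful,
additive self-functor `D` on the category of finite-dimensional `S`-modules with
`D (D M) ≅ M` and `D (L lam) ≅ L lam` for all `lam`. -/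
structure Duality (Q : QHData S Λ) where
  D : ModuleCat.{0} S → ModuleCat.{0} S
  Dmap : ∀ {A B : ModuleCat.{0} S}, (↥A →ₗ[S] ↥B) → (↥(D B) →ₗ[S] ↥(D A))
  finD : ∀ M : ModuleCat.{0} S, Module.Finite S ↥M → Module.Finite S ↥(D M)
  Did : ∀ A : ModuleCat.{0} S, Module.Finite S ↥A →
    Dmap (LinearMap.id : ↥A →ₗ[S] ↥A) = LinearMap.id
  Dcomp : ∀ {A B C : ModuleCat.{0} S}, Module.Finite S ↥A → Module.Finite S ↥B →
    Module.Finite S ↥C → ∀ (f : ↥A →ₗ[S] ↥B) (g : ↥B →ₗ[S] ↥C),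
      Dmap (g ∘ₗ f) = Dmap f ∘ₗ Dmap g
  Dadd : ∀ {A B : ModuleCat.{0} S}, Module.Finite S ↥A → Module.Finite S ↥B →
    ∀ (f g : ↥A →ₗ[S] ↥B), Dmap (f + g) = Dmap f + Dmap g
  Dfull : ∀ {A B : ModuleCat.{0} S}, Module.Finite S ↥A → Module.Finite S ↥B →
    Function.Bijective (fun f : ↥A →ₗ[S] ↥B => Dmap f)
  Dexact : ∀ {A B C : ModuleCat.{0} S}, Module.Finite S ↥A → Module.Finite S ↥B →
    Module.Finite S ↥C → ∀ (f : ↥A →ₗ[S] ↥B) (g : ↥B →ₗ[S] ↥C),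
      Function.Injective f → Function.Surjective g →
      LinearMap.range f = LinearMap.ker g →
      Function.Injective (Dmap g) ∧ Function.Surjective (Dmap f) ∧
        LinearMap.range (Dmap g) = LinearMap.ker (Dmap f)
  Dinvol : ∀ M : ModuleCat.{0} S, Module.Finite S ↥M → Nonempty (↥(D (D M)) ≃ₗ[S] ↥M)
  DL : ∀ lam, Nonempty (↥(D (Q.L lam)) ≃ₗ[S] ↥(Q.L lam))

/-- Strong property A: `mu < lam` implies `gfd (L mu) < gfd (L lam)`. -/
def StrongPropA (Q : QHData S Λ) : Prop :=
  ∀ mu lam : Λ, mu < lam → gfd S Q (Q.L mu) < gfd S Q (Q.L lam)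

/-- Property A: `mu < lam` implies `gfd (L mu) ≤ gfd (L lam)`. -/
def PropA (Q : QHData S Λ) : Prop :=
  ∀ mu lam : Λ, mu < lam → gfd S Q (Q.L mu) ≤ gfd S Q (Q.L lam)

/-- Property B: `mu < lam` implies `wfd (∇ mu) ≤ wfd (∇ lam)`. -/
def PropB (Q : QHData S Λ) : Prop :=
  ∀ mu lam : Λ, mu < lam → wfd S Q (Q.costd mu) ≤ wfd S Q (Q.costd lam)

/-- Property C: `wfd (∇ lam) = gfd S - inj (∇ lam)` for all `lam`. -/
def PropC (Q : QHData S Λ) : Prop :=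
  ∀ lam : Λ, wfd S Q (Q.costd lam) = gfdAlg S Q - injdim S (Q.costd lam)

/-- Property D: `wfd (∇ lam) = wfd (L lam)` for all `lam`. -/
def PropD (Q : QHData S Λ) : Prop :=
  ∀ lam : Λ, wfd S Q (Q.costd lam) = wfd S Q (Q.L lam)

/-- Property E: `mu < lam` implies `inj (∇ mu) ≥ inj (∇ lam)`. -/
def PropE (Q : QHData S Λ) : Prop :=
  ∀ mu lam : Λ, mu < lam → injdim S (Q.costd lam) ≤ injdim S (Q.costd mu)

/-- The partial order is minimal for the quasi-hereditary structure: whenever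
`mu < lam` are adjacent, `L mu` is a composition factor of `Δ lam` or of `∇ lam`. -/
def MinimalOrder (Q : QHData S Λ) : Prop :=
  ∀ mu lam : Λ, mu < lam → (¬ ∃ nu, mu < nu ∧ nu < lam) →
    IsCompFactor S (Q.L mu) (Q.std lam) ∨ IsCompFactor S (Q.L mu) (Q.costd lam)

/-- `S` is connected (indecomposable as an algebra, i.e. one block): the only
central idempotents are `0` and `1`. -/
def ConnectedRing : Prop :=
  ∀ c : S, c * c = c → (∀ s : S, c * s = s * c) → c = 0 ∨ c = 1

/-- A tilting module: a module in `F(Δ) ∩ F(∇)`. -/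
def IsTilting (Q : QHData S Λ) (T : ModuleCat.{0} S) : Prop :=
  InStdFilt S Q T ∧ InCostdFilt S Q T

/-- The indecomposable tilting module `T(lam)`: an indecomposable tilting module in
which `L lam` occurs exactly once and all other composition factors `L mu` have
`mu < lam`. -/
def IsIndecTilting (Q : QHData S Λ) (lam : Λ) (T : ModuleCat.{0} S) : Prop :=
  IsTilting S Q T ∧ Nontrivial ↥T ∧
    (∀ A B : Submodule S ↥T, IsCompl A B → A = ⊥ ∨ B = ⊥) ∧
    CompFactorMult S (Q.L lam) T 1 ∧
    ∀ mu, IsCompFactor S (Q.L mu) T → mu = lam ∨ mu < lam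

/-- A full tilting module: a (finite-dimensional) tilting module having every
indecomposable tilting module as a direct summand. -/
def IsFullTilting (Q : QHData S Λ) (T : ModuleCat.{0} S) : Prop :=
  IsTilting S Q T ∧ Module.Finite S ↥T ∧
    ∀ (lam : Λ) (Tl : ModuleCat.{0} S), IsIndecTilting S Q lam Tl →
      ∃ Cc : ModuleCat.{0} S, Nonempty (↥T ≃ₗ[S] (↥Tl × ↥Cc))

/-- The Ringel dual ring `S' = End_S(T)^op`. -/
abbrev RingelDualRing (T : ModuleCat.{0} S) : Type := (Module.End S ↥T)ᵐᵒᵖ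

/-- `Hom_S(T, X)` is a module over `S' = End_S(T)^op` via `f • φ = φ ∘ f`. -/
instance homTModule (T X : ModuleCat.{0} S) :
    Module (RingelDualRing S T) (↥T →ₗ[S] ↥X) where
  smul a φ := φ ∘ₗ a.unop
  one_smul φ := rfl
  mul_smul a b φ := rfl
  smul_zero a := rfl
  smul_add a φ ψ := rfl
  add_smul a b φ := by
    ext x
    show φ ((a.unop + b.unop) x) = φ (a.unop x) + φ (b.unop x)
    rw [LinearMap.add_apply, map_add]
  zero_smul φ := by
    ext x
    show φ ((0 : Module.End S ↥T) x) = 0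
    rw [LinearMap.zero_apply, map_zero]

/-- The `S'`-module `Hom_S(T, X)`, i.e. the image of `X` under the functor
`F = Hom_S(T, -)`. -/
noncomputable def homTMod (T X : ModuleCat.{0} S) :
    ModuleCat.{0} (RingelDualRing S T) :=
  ModuleCat.of (RingelDualRing S T) (↥T →ₗ[S] ↥X)

/-- `Q'` is a Ringel dual quasi-hereditary structure for `(Q, T)`:
`T` is a full tilting module, `Q'` is a quasi-hereditary structure on
`S' = End_S(T)^op` for the opposite poset, and its standard modules are
`Δ'(lam) = Hom_S(T, ∇(lam))`. -/
def IsRingelDualData (Q : QHData S Λ) (T : ModuleCat.{0} S)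
    (Q' : QHData (RingelDualRing S T) Λᵒᵈ) : Prop :=
  IsFullTilting S Q T ∧
    ∀ lam : Λ, Nonempty
      (↥(Q'.std (OrderDual.toDual lam)) ≃ₗ[RingelDualRing S T]
        (↥T →ₗ[S] ↥(Q.costd lam)))

/-- `0 → T_d → ⋯ → T_0 → M → 0` exact with all `T_i` tilting modules. -/
def TiltResLE (Q : QHData S Λ) (M : ModuleCat.{0} S) (d : ℕ) : Prop :=
  ∃ (N : Fin (d + 2) → ModuleCat.{0} S)
    (f : ∀ i : Fin (d + 1), ↥(N i.castSucc) →ₗ[S] ↥(N i.succ)),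
    IsExactSeq S d N f ∧ N (Fin.last (d + 1)) = M ∧
    ∀ i : Fin (d + 1), IsTilting S Q (N i.castSucc)

/-- An idempotent `e` is primitive if it is nonzero and is not the sum of two
nonzero orthogonal idempotents. -/
def IsPrimitiveIdempotent (e : S) : Prop :=
  e * e = e ∧ e ≠ 0 ∧ ∀ a b : S, a * a = a → b * b = b → a * b = 0 → b * a = 0 →
    e = a + b → a = 0 ∨ b = 0

/-- The additive subgroup `e•M = {m | e • m = m}` of `M` (for `e` idempotent). -/
def cornerSet (eG : S) (M : ModuleCat.{0} S) : AddSubgroup ↥M where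
  carrier := {m | eG • m = m}
  add_mem' := by
    intro a b ha hb
    simp only [Set.mem_setOf_eq] at *
    rw [smul_add, ha, hb]
  zero_mem' := by
    simp only [Set.mem_setOf_eq]
    rw [smul_zero]
  neg_mem' := by
    intro a ha
    simp only [Set.mem_setOf_eq] at *
    rw [smul_neg, ha]

/-- The `R`-module structure on `e•M`, where `ι : R → S` identifies `R` with the
corner ring `eSe` (as a non-unital ring, with `ι 1 = e`). -/
def cornerModuleStructure (R : Type) [Ring R] (ι : R →ₙ+* S) (eG : S)
    (hone : ι 1 = eG) (hrange : ∀ r : R, eG * ι r * eG = ι r)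
    (M : ModuleCat.{0} S) : Module R ↥(cornerSet S eG M) where
  smul r m := ⟨ι r • (m : ↥M), by
    have hm : eG • (m : ↥M) = (m : ↥M) := m.2
    show eG • (ι r • (m : ↥M)) = ι r • (m : ↥M)
    have h : eG • (ι r • (m : ↥M)) = (eG * ι r * eG) • (m : ↥M) := by
      rw [mul_assoc, mul_smul, mul_smul, hm]
    rw [h, hrange]⟩
  one_smul m := by
    apply Subtype.ext
    show ι 1 • (m : ↥M) = (m : ↥M)
    rw [hone]
    exact m.2
  mul_smul r s m := by
    apply Subtype.ext
    show ι (r * s) • (m : ↥M) = ι r • (ι s • (m : ↥M))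
    rw [map_mul, mul_smul]
  smul_zero r := by
    apply Subtype.ext
    show ι r • (0 : ↥M) = 0
    rw [smul_zero]
  smul_add r m n := by
    apply Subtype.ext
    show ι r • ((m : ↥M) + (n : ↥M)) = ι r • (m : ↥M) + ι r • (n : ↥M)
    rw [smul_add]
  add_smul r s m := by
    apply Subtype.ext
    show ι (r + s) • (m : ↥M) = ι r • (m : ↥M) + ι s • (m : ↥M)
    rw [map_add, add_smul]
  zero_smul m := by
    apply Subtype.ext
    show ι 0 • (m : ↥M) = 0
    rw [map_zero, zero_smul]

/-- The `R`-module `e•M`, where `R ≅ eSe` via `ι`. -/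
noncomputable def cornerMod (R : Type) [Ring R] (ι : R →ₙ+* S) (eG : S)
    (hone : ι 1 = eG) (hrange : ∀ r : R, eG * ι r * eG = ι r)
    (M : ModuleCat.{0} S) : ModuleCat.{0} R :=
  @ModuleCat.of R _ ↥(cornerSet S eG M) _
    (cornerModuleStructure S R ι eG hone hrange M)

end QHPaper

namespace QHPaper
open CategoryTheory Abelian

section ExtLemmas
variable {S : Type} [Ring S]
variable {A B C X Y : Type} [AddCommGroup A] [Module S A] [AddCommGroup B] [Module S B]
  [AddCommGroup C] [Module S C] [AddCommGroup X] [Module S X] [AddCommGroup Y] [Module S Y]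

/-- `0 → A → B → C → 0` is exact. -/
structure SES (f : A →ₗ[S] B) (g : B →ₗ[S] C) : Prop where
  inj : Function.Injective f
  surj : Function.Surjective g
  exact : LinearMap.range f = LinearMap.ker g

theorem SES.comp_zero {f : A →ₗ[S] B} {g : B →ₗ[S] C} (h : SES f g) (a : A) : g (f a) = 0 := by
  have : f a ∈ LinearMap.ker g := by rw [← h.exact]; exact ⟨a, rfl⟩
  exact this

theorem SES.lift {f : A →ₗ[S] B} {g : B →ₗ[S] C} (h : SES f g) {b : B} (hb : g b = 0) :
    ∃ a, f a = b := by
  have : b ∈ LinearMap.range f := by rw [h.exact]; exact hb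
  exact this

theorem SES.of_sub (N : Submodule S B) : SES N.subtype N.mkQ :=
  ⟨N.injective_subtype, N.mkQ_surjective, by simp⟩

theorem SES.of_ker {g : B →ₗ[S] C} (hg : Function.Surjective g) :
    SES (LinearMap.ker g).subtype g :=
  ⟨Submodule.injective_subtype _, hg, by simp⟩

theorem SES.of_range {f : A →ₗ[S] B} (hf : Function.Injective f) :
    SES f (LinearMap.range f).mkQ :=
  ⟨hf, Submodule.mkQ_surjective _, by simp⟩

/-- factor a map vanishing on `A` through `C` -/
theorem SES.desc {f : A →ₗ[S] B} {g : B →ₗ[S] C} (h : SES f g) (φ : B →ₗ[S] X)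
    (hφ : ∀ a, φ (f a) = 0) : ∃ ψ : C →ₗ[S] X, ∀ b, ψ (g b) = φ b := by
  have e := g.quotKerEquivOfSurjective h.surj
  refine ⟨((LinearMap.ker g).liftQ φ ?_) ∘ₗ (g.quotKerEquivOfSurjective h.surj).symm.toLinearMap,
    fun b => ?_⟩
  · intro b hb
    obtain ⟨a, rfl⟩ := h.lift hb
    exact hφ a
  · have : (g.quotKerEquivOfSurjective h.surj).symm (g b) = (LinearMap.ker g).mkQ b := by
      rw [LinearEquiv.symm_apply_eq]; rfl
    simp [this]

variable (S A) in
abbrev mc : ModuleCat.{0} S := ModuleCat.of S A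

theorem SES.se {f : A →ₗ[S] B} {g : B →ₗ[S] C} (h : SES f g) :
    (ShortComplex.mk (ModuleCat.ofHom f) (ModuleCat.ofHom g)
      (by ext a; exact h.comp_zero a)).ShortExact where
  exact := by
    rw [ShortComplex.moduleCat_exact_iff]
    intro x hx
    exact h.lift hx
  mono_f := (ModuleCat.mono_iff_injective _).2 h.inj
  epi_g := (ModuleCat.epi_iff_surjective _).2 h.surj

variable (S) in
/-- `Ext^n(X,Y) = 0`. -/
def EV (n : ℕ) (X Y : Type) [AddCommGroup X] [Module S X] [AddCommGroup Y] [Module S Y] : Prop :=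
  ∀ e : Ext (mc S X) (mc S Y) n, e = 0

theorem EV.zero_of_hom (h : ∀ φ : X →ₗ[S] Y, φ = 0) : EV S 0 X Y := by
  intro e
  obtain ⟨f, rfl⟩ := Ext.homEquiv₀.symm.surjective e
  have : f = 0 := by ext x; have := h f.hom; simp [this]
  rw [this]; simp

theorem EV.proj [Module.Projective S X] (n : ℕ) : EV S (n+1) X Y := by
  intro e
  haveI : Projective (mc S X) := (IsProjective.iff_projective X).1 inferInstance
  exact e.eq_zero_of_projective

theorem EV.inj [Module.Injective S Y] (n : ℕ) : EV S (n+1) X Y := by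
  intro e
  haveI : Injective (mc S Y) := Module.injective_object_of_injective_module S Y
  exact e.eq_zero_of_injective

theorem EV.of_sub_src [Subsingleton X] (n : ℕ) : EV S n X Y := by
  intro e
  have hz : Limits.IsZero (mc S X) := ModuleCat.isZero_of_subsingleton _
  rw [← e.mk₀_id_comp, hz.eq_of_src (𝟙 _) 0, Ext.mk₀_zero, Ext.zero_comp]

theorem EV.of_sub_tgt [Subsingleton Y] (n : ℕ) : EV S n X Y := by
  intro e
  have hz : Limits.IsZero (mc S Y) := ModuleCat.isZero_of_subsingleton _
  rw [← e.comp_mk₀_id, hz.eq_of_src (𝟙 _) 0, Ext.mk₀_zero, Ext.comp_zero]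

variable {f : A →ₗ[S] B} {g : B →ₗ[S] C}

/-- covariant, middle -/
theorem EV.co_mid (h : SES f g) {n : ℕ} (h1 : EV S n X A) (h3 : EV S n X C) : EV S n X B := by
  intro e
  obtain ⟨x, rfl⟩ := Ext.covariant_sequence_exact₂ (mc S X) h.se e (h3 _)
  rw [h1 x, Ext.zero_comp]

/-- covariant, right -/
theorem EV.co_right (h : SES f g) {n : ℕ} (h2 : EV S n X B) (h1 : EV S (n+1) X A) : EV S n X C := by
  intro e
  obtain ⟨x, rfl⟩ := Ext.covariant_sequence_exact₃ (mc S X) h.se e rfl (h1 _)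
  rw [h2 x, Ext.zero_comp]

/-- covariant, left -/
theorem EV.co_left (h : SES f g) {n : ℕ} (h2 : EV S (n+1) X B) (h1 : EV S n X C) : EV S (n+1) X A := by
  intro e
  obtain ⟨x, rfl⟩ := Ext.covariant_sequence_exact₁ (mc S X) h.se e (h2 _) rfl
  rw [h1 x, Ext.zero_comp]

/-- contravariant, middle -/
theorem EV.contra_mid (h : SES f g) {n : ℕ} (h1 : EV S n A Y) (h3 : EV S n C Y) : EV S n B Y := by
  intro e
  obtain ⟨x, rfl⟩ := Ext.contravariant_sequence_exact₂ h.se (mc S Y) e (h1 _)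
  rw [h3 x, Ext.comp_zero]

/-- contravariant, right -/
theorem EV.contra_right (h : SES f g) {n : ℕ} (h1 : EV S n A Y) (h2 : EV S (n+1) B Y) : EV S (n+1) C Y := by
  intro e
  obtain ⟨x, rfl⟩ := Ext.contravariant_sequence_exact₃ h.se (mc S Y) e (h2 _) (add_comm 1 n)
  rw [h1 x, Ext.comp_zero]

theorem EV.extend (h : SES f g) (h1 : EV S 1 C Y) (φ : A →ₗ[S] Y) : ∃ ψ : B →ₗ[S] Y, ∀ a, ψ (f a) = φ a := by
  obtain ⟨x, hx⟩ := Ext.contravariant_sequence_exact₁ h.se (mc S Y)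
    (Ext.mk₀ (ModuleCat.ofHom φ)) rfl (h1 _)
  obtain ⟨ψ, rfl⟩ := Ext.homEquiv₀.symm.surjective x
  refine ⟨ψ.hom, fun a => ?_⟩
  rw [Ext.homEquiv₀_symm_apply, Ext.mk₀_comp_mk₀] at hx
  have h2 := (Ext.mk₀_bijective _ _).1 hx
  exact congrArg (fun t => t.hom a) h2

theorem EV.of_extend (h : SES f g) (hB : EV S 1 B Y)
    (h1 : ∀ φ : A →ₗ[S] Y, ∃ ψ : B →ₗ[S] Y, ∀ a, ψ (f a) = φ a) : EV S 1 C Y := by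
  intro e
  obtain ⟨x, rfl⟩ := Ext.contravariant_sequence_exact₃ h.se (mc S Y) e (hB _) (n₀ := 0) rfl
  obtain ⟨φ, rfl⟩ := Ext.homEquiv₀.symm.surjective x
  obtain ⟨ψ, hψ⟩ := h1 φ.hom
  have : φ = ModuleCat.ofHom f ≫ ModuleCat.ofHom ψ := by
    ext a; exact (hψ a).symm
  rw [this, Ext.homEquiv₀_symm_apply, ← Ext.mk₀_comp_mk₀]
  exact h.se.extClass_comp_assoc _ 

end ExtLemmas
end QHPaper

namespace QHPaper
open CategoryTheory Abelian

section FiltLemmas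
variable {S : Type} [Ring S] {Λ : Type}

/-- Inductive version of filtrations with sections `D i`, `p i`. -/
inductive Filt (D : Λ → ModuleCat.{0} S) (p : Λ → Prop) :
    ∀ (M : Type) [AddCommGroup M] [Module S M], Prop
  | zero {M : Type} [AddCommGroup M] [Module S M] [Subsingleton M] : Filt D p M
  | step {A B : Type} [AddCommGroup A] [Module S A] [AddCommGroup B] [Module S B]
      (i : Λ) (hi : p i) (f : A →ₗ[S] B) (g : B →ₗ[S] ↥(D i)) (h : SES f g)
      (hA : Filt D p A) : Filt D p B

variable {D : Λ → ModuleCat.{0} S} {p q : Λ → Prop}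
variable {A B C : Type} [AddCommGroup A] [Module S A] [AddCommGroup B] [Module S B]
  [AddCommGroup C] [Module S C]

theorem Filt.mono (hA : Filt D p A) (hpq : ∀ i, p i → q i) : Filt D q A := by
  induction hA with
  | zero => exact .zero
  | step i hi f g h _ ih => exact .step i (hpq i hi) f g h ih

theorem Filt.ext' (hA : Filt D p A) (hC : Filt D p C) :
    ∀ (B : Type) [AddCommGroup B] [Module S B] (f : A →ₗ[S] B) (g : B →ₗ[S] C), SES f g →
      Filt D p B := by
  induction hC with
  | zero =>
    intro B _ _ f g h
    have e : Function.Surjective f := fun b => h.lift (Subsingleton.elim _ _)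
    cases hA with
    | zero =>
      have : Subsingleton B := e.subsingleton
      exact .zero
    | step i hi f' g' h' hA =>
      let eq := LinearEquiv.ofBijective f ⟨h.inj, e⟩
      refine .step i hi (f ∘ₗ f') (g' ∘ₗ eq.symm.toLinearMap)
        ⟨h.inj.comp h'.inj, h'.surj.comp eq.symm.surjective, ?_⟩ hA
      rw [LinearMap.range_comp, h'.exact]
      ext x
      constructor
      · rintro ⟨y, hy, rfl⟩
        have : eq.symm (f y) = y := eq.symm_apply_apply y
        simpa [this] using hy
      · intro hx
        exact ⟨eq.symm x, hx, eq.apply_symm_apply x⟩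
  | @step C' C _ _ _ _ i hi f' g' h' hC' ih =>
    intro B _ _ f g h
    let N : Submodule S B := LinearMap.ker (g' ∘ₗ g)
    have hfN : ∀ a, f a ∈ N := fun a => by simp [N, h.comp_zero]
    -- map N → C'
    let eC := LinearEquiv.ofInjective f' h'.inj
    have hr : ∀ x : N, g x ∈ LinearMap.range f' := by
      intro x; rw [h'.exact]; exact x.2
    let u : N →ₗ[S] C' := eC.symm.toLinearMap ∘ₗ
      LinearMap.codRestrict (LinearMap.range f') (g ∘ₗ N.subtype) hr
    have hu : ∀ x : N, f' (u x) = g x := by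
      intro x
      have : eC (u x) = ⟨g x, hr x⟩ := by simp [u]; rfl
      exact congrArg Subtype.val this
    have hs : SES (f.codRestrict N hfN) u := by
      refine ⟨fun a b hab => h.inj (congrArg Subtype.val hab), ?_, ?_⟩
      · intro c
        obtain ⟨b, hb⟩ := h.surj (f' c)
        refine ⟨⟨b, by simp [N, hb, h'.comp_zero]⟩, h'.inj ?_⟩
        rw [hu]; exact hb
      · ext x
        constructor
        · rintro ⟨a, rfl⟩
          apply h'.inj
          rw [hu, map_zero]
          exact h.comp_zero a
        · intro hx
          have : g x = 0 := by rw [← hu, show u x = 0 from hx, map_zero]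
          obtain ⟨a, ha⟩ := h.lift this
          exact ⟨a, Subtype.ext ha⟩
    exact .step i hi N.subtype (g' ∘ₗ g)
      ⟨N.injective_subtype, h'.surj.comp h.surj, by simp [N]⟩ (ih N _ _ hs)

theorem Filt.ext {f : A →ₗ[S] B} {g : B →ₗ[S] C} (h : SES f g) (hA : Filt D p A)
    (hC : Filt D p C) : Filt D p B := Filt.ext' hA hC B f g h

theorem Filt.equiv (e : A ≃ₗ[S] B) (hA : Filt D p A) : Filt D p B :=
  Filt.ext (C := PUnit) (f := e.toLinearMap) (g := 0)
    ⟨e.injective, fun _ => ⟨0, Subsingleton.elim _ _⟩, by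
      rw [LinearMap.range_eq_top.2 e.surjective, LinearMap.ker_zero]⟩ hA .zero

theorem Filt.single (i : Λ) (hi : p i) : Filt D p ↥(D i) :=
  .step (A := PUnit) i hi 0 LinearMap.id
    ⟨fun _ _ _ => Subsingleton.elim _ _, fun x => ⟨x, rfl⟩, by simp⟩ .zero

theorem Filt.to_fin (hA : Filt D p A) : ∃ (n : ℕ) (f : Fin (n + 1) → Submodule S ↥(mc S A))
    (g : Fin n → Λ), HasFiltrationWithSections S (mc S A) n f (fun i => D (g i)) := by
  induction hA with
  | zero =>
    refine ⟨0, fun _ => ⊥, Fin.elim0, fun _ _ _ => le_rfl, rfl, Subsingleton.elim _ _,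
      fun i => i.elim0⟩
  | @step A B _ _ _ _ i hi φ ψ h hA ih =>
    obtain ⟨n, f, g, hm, h0, h1, hsec⟩ := ih
    let F : Fin (n + 2) → Submodule S B :=
      Fin.snoc (α := fun _ => Submodule S B) (fun j => (f j).map φ) ⊤
    have Fc : ∀ j : Fin (n+1), F j.castSucc = (f j).map φ := fun j => by simp [F]
    have Fl : F (Fin.last (n+1)) = ⊤ := by simp [F]
    let G : Fin (n + 1) → Λ := Fin.snoc (α := fun _ => Λ) g i
    have Gc : ∀ j : Fin n, G j.castSucc = g j := fun j => by simp [G]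
    have Gl : G (Fin.last n) = i := by simp [G]
    refine ⟨n+1, F, G, ?_, ?_, Fl, ?_⟩
    · rw [Fin.monotone_iff_le_succ]
      intro j
      induction j using Fin.lastCases with
      | last => rw [Fin.succ_last, Fl]; exact le_top
      | cast j =>
        rw [Fin.succ_castSucc, Fc, Fc]
        exact Submodule.map_mono (hm (Fin.castSucc_lt_succ).le)
    · have := Fc 0
      rw [Fin.castSucc_zero] at this
      rw [this, h0]; exact Submodule.map_bot _
    · intro j
      induction j using Fin.lastCases with
      | last =>
        beta_reduce
        rw [Gl, Fin.succ_last, Fl, Fc, h1]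
        let w : (⊤ : Submodule S B) →ₗ[S] D i := ψ ∘ₗ Submodule.subtype _
        have hw : Function.Surjective w := fun x => by
          obtain ⟨b, hb⟩ := h.surj x
          exact ⟨⟨b, trivial⟩, hb⟩
        have hk : LinearMap.ker w =
            Submodule.comap (⊤ : Submodule S B).subtype ((⊤ : Submodule S A).map φ) := by
          rw [Submodule.map_top, h.exact]; rfl
        exact ⟨(Submodule.quotEquivOfEq _ _ hk.symm).trans (w.quotKerEquivOfSurjective hw)⟩
      | cast j =>
        beta_reduce
        rw [Gc, Fin.succ_castSucc, Fc, Fc]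
        obtain ⟨e⟩ := hsec j
        let a := f j.castSucc
        let b := f j.succ
        let E := Submodule.equivMapOfInjective φ h.inj b
        refine ⟨(Submodule.Quotient.equiv _ _ E ?_).symm.trans e⟩
        ext x
        constructor
        · rintro ⟨y, hy, rfl⟩
          exact ⟨y, hy, rfl⟩
        · rintro ⟨y, hy, hyx⟩
          obtain ⟨z, rfl⟩ := E.surjective x
          refine ⟨z, ?_, rfl⟩
          have : y = z := h.inj hyx
          show (z : A) ∈ f j.castSucc
          rw [← this]; exact hy

theorem Filt.of_fin {n : ℕ} {f : Fin (n + 1) → Submodule S ↥(mc S A)} {g : Fin n → Λ}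
    (H : HasFiltrationWithSections S (mc S A) n f (fun i => D (g i))) (i : Fin (n+1)) :
    (∀ j : Fin n, j.castSucc < i → p (g j)) → Filt D p (f i) := by
  obtain ⟨hm, h0, h1, hsec⟩ := H
  induction i using Fin.induction with
  | zero =>
    intro _
    rw [h0]
    exact .zero
  | succ i ih =>
    intro hp
    obtain ⟨e⟩ := hsec i
    have hle : f i.castSucc ≤ f i.succ := hm (Fin.castSucc_lt_succ).le
    refine .step (g i) (hp i Fin.castSucc_lt_succ) (Submodule.inclusion hle)
      (e.toLinearMap ∘ₗ Submodule.mkQ _) ⟨Submodule.inclusion_injective hle,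
        e.surjective.comp (Submodule.mkQ_surjective _), ?_⟩
      (ih fun j hj => hp j (hj.trans Fin.castSucc_lt_succ))
    rw [LinearEquiv.ker_comp, Submodule.ker_mkQ, Submodule.range_inclusion]

theorem Filt.iff_fin : Filt D (fun _ => True) A ↔
    ∃ (n : ℕ) (f : Fin (n + 1) → Submodule S ↥(mc S A))
    (g : Fin n → Λ), HasFiltrationWithSections S (mc S A) n f (fun i => D (g i)) := by
  refine ⟨Filt.to_fin, ?_⟩
  rintro ⟨n, f, g, H⟩
  have := Filt.of_fin (p := fun _ => True) H (Fin.last n) (fun _ _ => trivial)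
  rw [H.2.2.1] at this
  exact Filt.equiv Submodule.topEquiv this

/-- resolutions of length `d` by modules in the class `K`. -/
def Res (K : ∀ (M : Type) [AddCommGroup M] [Module S M], Prop) :
    ℕ → ∀ (M : Type) [AddCommGroup M] [Module S M], Prop
  | 0, M, _, _ => K M
  | d+1, M, _, _ => ∃ (B A : ModuleCat.{0} S) (f : B →ₗ[S] A) (g : A →ₗ[S] M), SES f g ∧
      K A ∧ Res K d B

theorem Res.of_seq (K : ∀ (M : Type) [AddCommGroup M] [Module S M], Prop)
    (hK : ∀ (M M' : ModuleCat.{0} S), (M ≃ₗ[S] M') → K M → K M')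
    (d : ℕ) (N : Fin (d + 2) → ModuleCat.{0} S)
    (f : ∀ i : Fin (d + 1), ↥(N i.castSucc) →ₗ[S] ↥(N i.succ))
    (h : IsExactSeq S d N f) (hN : ∀ i : Fin (d+1), K (N i.castSucc)) :
    Res K d (N (Fin.last (d+1))) := by
  obtain ⟨hi, hs, he⟩ := h
  have hres : ∀ (d : ℕ) (M M' : ModuleCat.{0} S), (M ≃ₗ[S] M') → Res K d M → Res K d M' := by
    intro d M M' e hM
    cases d with
    | zero => exact hK _ _ e hM
    | succ d =>
      obtain ⟨B, A, f, g, h, hA, hB⟩ := hM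
      refine ⟨B, A, f, e.toLinearMap ∘ₗ g, ⟨h.inj, e.surjective.comp h.surj, ?_⟩, hA, hB⟩
      rw [LinearEquiv.ker_comp, h.exact]
  have key : ∀ i : Fin (d+1), Res K i (mc S (LinearMap.range (f i))) := by
    intro i
    induction i using Fin.induction with
    | zero =>
      exact hK (N (Fin.castSucc 0)) (mc S (LinearMap.range (f 0)))
        (LinearEquiv.ofInjective (f 0) hi) (hN 0)
    | succ i ih =>
      refine ⟨mc S (LinearMap.range (f i.castSucc)), N i.succ.castSucc,
        Submodule.subtype (LinearMap.range (f i.castSucc)), (f i.succ).rangeRestrict,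
        ⟨Submodule.injective_subtype _, LinearMap.surjective_rangeRestrict _, ?_⟩, hN i.succ, ?_⟩
      · rw [Submodule.range_subtype, LinearMap.ker_rangeRestrict]; exact he i
      · simpa using ih
  have := key (Fin.last d)
  refine hres d _ _ ?_ this
  exact (LinearEquiv.ofEq _ _ (LinearMap.range_eq_top.2 hs)).trans Submodule.topEquiv

/-- ℕ-indexed, reversed version. -/
def RRes (K : ModuleCat.{0} S → Prop) (d : ℕ) (M : ModuleCat.{0} S) : Prop :=
  ∃ (C : ℕ → ModuleCat.{0} S) (δ : ∀ i, C (i+1) →ₗ[S] C i), C 0 = M ∧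
    Function.Surjective (δ 0) ∧ Function.Injective (δ d) ∧
    (∀ i, i < d → LinearMap.range (δ (i+1)) = LinearMap.ker (δ i)) ∧ ∀ i, i ≤ d → K (C (i+1))

def consC (M A : ModuleCat.{0} S) (C : ℕ → ModuleCat.{0} S) : ℕ → ModuleCat.{0} S
  | 0 => M
  | 1 => A
  | (i+2) => C (i+1)

def consδ {M A : ModuleCat.{0} S} {C : ℕ → ModuleCat.{0} S} (δ : ∀ i, C (i+1) →ₗ[S] C i)
    (f : C 0 →ₗ[S] A) (g : A →ₗ[S] M) : ∀ i, consC M A C (i+1) →ₗ[S] consC M A C i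
  | 0 => g
  | 1 => f ∘ₗ δ 0
  | (i+2) => δ (i+1)

theorem Res.toR (K : ∀ (M : Type) [AddCommGroup M] [Module S M], Prop) (d : ℕ) :
    ∀ (M : ModuleCat.{0} S), Res K d M → RRes (fun X => K X) d M := by
  induction d with
  | zero =>
    intro M hM
    refine ⟨fun _ => M, fun _ => LinearMap.id, rfl, fun x => ⟨x, rfl⟩, fun _ _ h => h,
      fun i hi => absurd hi (Nat.not_lt_zero _), fun i _ => hM⟩
  | succ d ih =>
    rintro M ⟨B, A, f, g, h, hA, hB⟩
    obtain ⟨C, δ, rfl, hs, hi, he, hK⟩ := ih B hB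
    refine ⟨consC M A C, consδ δ f g, rfl, h.surj, ?_, ?_, ?_⟩
    · cases d with
      | zero => exact h.inj.comp hi
      | succ d => exact hi
    · intro i hi
      rcases i with _ | _ | i
      · show LinearMap.range (f ∘ₗ δ 0) = LinearMap.ker g
        rw [LinearMap.range_comp_of_range_eq_top _ (LinearMap.range_eq_top.2 hs)]
        exact h.exact
      · show LinearMap.range (δ 1) = LinearMap.ker (f ∘ₗ δ 0)
        rw [LinearMap.ker_comp_of_ker_eq_bot _ (LinearMap.ker_eq_bot.2 h.inj)]
        exact he 0 (by omega)
      · exact he (i+1) (by omega)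
    · intro i hi
      rcases i with _ | i
      · exact hA
      · exact hK i (by omega)

def castδ {C : ℕ → ModuleCat.{0} S} (δ : ∀ i, C (i+1) →ₗ[S] C i) (a b : ℕ) (h : a = b + 1) :
    C a →ₗ[S] C b := by
  subst h; exact δ b

theorem RRes.toSeq (K : ModuleCat.{0} S → Prop) (d : ℕ) (M : ModuleCat.{0} S) (h : RRes K d M) :
    ∃ (N : Fin (d + 2) → ModuleCat.{0} S)
    (f : ∀ i : Fin (d + 1), ↥(N i.castSucc) →ₗ[S] ↥(N i.succ)),
    IsExactSeq S d N f ∧ N (Fin.last (d + 1)) = M ∧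
    ∀ i : Fin (d + 1), K (N i.castSucc) := by
  obtain ⟨C, δ, rfl, hs, hi, he, hK⟩ := h
  have hex : ∀ a b c (h1 : a = b+1) (h2 : b = c+1), c < d →
      LinearMap.range (castδ δ a b h1) = LinearMap.ker (castδ δ b c h2) := by
    intro a b c h1 h2 h; subst h1; subst h2; exact he c h
  have hinj : ∀ a b (h1 : a = b+1), b = d → Function.Injective (castδ δ a b h1) := by
    intro a b h1 h; subst h1; subst h; exact hi
  have hsur : ∀ a b (h1 : a = b+1), b = 0 → Function.Surjective (castδ δ a b h1) := by
    intro a b h1 h; subst h1; subst h; exact hs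
  refine ⟨fun i => C (d + 1 - i), fun i => castδ δ _ _ ?_, ⟨?_, ?_, ?_⟩, ?_, ?_⟩
  · have := i.2; simp; omega
  · exact hinj _ _ _ (by simp)
  · exact hsur _ _ _ (by simp)
  · intro i
    have := i.2
    exact hex _ _ _ _ _ (by simp; omega)
  · simp
  · intro i
    have h2 := i.2
    have : d + 1 - (i.castSucc : ℕ) = (d - i) + 1 := by simp; omega
    show K (C (d + 1 - (i.castSucc : ℕ)))
    rw [this]
    exact hK _ (by omega)

end FiltLemmas
end QHPaper

namespace QHPaper
open CategoryTheory Abelian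

section QH
variable {S : Type} [Ring S] {Λ : Type} [Fintype Λ] [PartialOrder Λ] (Q : QHData S Λ)
variable {A B C M : Type} [AddCommGroup A] [Module S A] [AddCommGroup B] [Module S B]
  [AddCommGroup C] [Module S C] [AddCommGroup M] [Module S M]

instance (l : Λ) : Module.Projective S (Q.P l) := (Q.projCover l).1
instance (l : Λ) : Module.Injective S (Q.I l) := (Q.injHull l).1
instance (l : Λ) : IsSimpleModule S (Q.L l) := Q.simpleL l
instance (l : Λ) : Nontrivial (Q.L l) := IsSimpleModule.nontrivial S _

/-- `L l` is a composition factor of `M`. -/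
def Fac (l : Λ) (M : Type) [AddCommGroup M] [Module S M] : Prop := ∃ φ : Q.P l →ₗ[S] M, φ ≠ 0

variable {Q}

theorem Fac.inj {l : Λ} (h : Fac Q l A) (f : A →ₗ[S] B) (hf : Function.Injective f) :
    Fac Q l B := by
  obtain ⟨φ, hφ⟩ := h
  refine ⟨f ∘ₗ φ, fun h0 => hφ ?_⟩
  ext x
  exact hf (by simpa using LinearMap.congr_fun h0 x)

theorem Fac.surj {l : Λ} (h : Fac Q l B) (f : A →ₗ[S] B) (hf : Function.Surjective f) :
    Fac Q l A := by
  obtain ⟨φ, hφ⟩ := h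
  obtain ⟨ψ, hψ⟩ := Module.projective_lifting_property f φ hf
  refine ⟨ψ, fun h0 => hφ ?_⟩
  rw [← hψ, h0, LinearMap.comp_zero]

theorem Fac.ext {l : Λ} {f : A →ₗ[S] B} {g : B →ₗ[S] C} (h : SES f g) (hB : Fac Q l B) :
    Fac Q l A ∨ Fac Q l C := by
  obtain ⟨φ, hφ⟩ := hB
  by_cases h0 : g ∘ₗ φ = 0
  · left
    have hr : ∀ x, φ x ∈ LinearMap.range f := fun x => by
      rw [h.exact]; exact LinearMap.congr_fun h0 x
    have h1 : Fac Q l (LinearMap.range f) := by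
      refine ⟨φ.codRestrict _ hr, fun h2 => hφ ?_⟩
      ext x
      exact congrArg Subtype.val (LinearMap.congr_fun h2 x)
    exact h1.inj (LinearEquiv.ofInjective f h.inj).symm.toLinearMap (LinearEquiv.injective _)
  · exact Or.inr ⟨_, h0⟩

theorem Fac.not_of_subsingleton [Subsingleton A] {l : Λ} : ¬ Fac Q l A := by
  rintro ⟨φ, hφ⟩
  exact hφ (LinearMap.ext fun x => Subsingleton.elim _ _)

variable (Q) in
theorem P_cov (l : Λ) : ∃ π : Q.P l →ₗ[S] Q.L l, Function.Surjective π ∧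
    ∀ N : Submodule S (Q.P l), N ≠ ⊤ → N ≤ LinearMap.ker π := by
  obtain ⟨_, π, hπ, hN⟩ := Q.projCover l
  refine ⟨π, hπ, fun N hNt => ?_⟩
  by_contra hle
  apply hNt
  apply hN
  rw [← Submodule.comap_map_eq]
  have : N.map π ≠ ⊥ := fun h => hle (LinearMap.le_ker_iff_map.2 h)
  rw [(eq_bot_or_eq_top (N.map π)).resolve_left this, Submodule.comap_top]

theorem Fac.self (l : Λ) : Fac Q l (Q.L l) := by
  obtain ⟨π, hπ, _⟩ := P_cov Q l
  refine ⟨π, fun h => ?_⟩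
  obtain ⟨x, hx⟩ := exists_ne (0 : Q.L l)
  obtain ⟨y, rfl⟩ := hπ x
  exact hx (by rw [h]; rfl)

theorem Fac.simple {l m : Λ} (h : Fac Q l (Q.L m)) : l = m := by
  obtain ⟨φ, hφ⟩ := h
  obtain ⟨π, hπ, hN⟩ := P_cov Q l
  have hs : Function.Surjective φ := LinearMap.surjective_of_ne_zero hφ
  have hk : LinearMap.ker φ ≤ LinearMap.ker π := hN _ (fun h => hφ (LinearMap.ker_eq_top.1 h))
  obtain ⟨ψ, hψ⟩ := (SES.of_ker hs).desc π (fun a => hk a.2)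
  have hψs : Function.Surjective ψ := fun y => by
    obtain ⟨x, rfl⟩ := hπ y
    exact ⟨φ x, hψ x⟩
  have hψ0 : ψ ≠ 0 := fun h => by
    obtain ⟨y, hy⟩ := exists_ne (0 : Q.L l)
    obtain ⟨x, rfl⟩ := hψs y
    exact hy (by rw [h]; rfl)
  by_contra hne
  exact (Q.nonisoL l m hne).false (LinearEquiv.ofBijective ψ (LinearMap.bijective_of_ne_zero hψ0)).symm

theorem Fac.iff_comp {l : Λ} : IsCompFactor S (Q.L l) (mc S M) ↔ Fac Q l M := by
  constructor
  · rintro ⟨A, B, hAB, ⟨e⟩⟩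
    have h1 : Fac Q l (subquot S A B) := (Fac.self l).inj e.symm.toLinearMap e.symm.injective
    have h2 : Fac Q l B := h1.surj (Submodule.mkQ _) (Submodule.mkQ_surjective _)
    exact h2.inj B.subtype B.injective_subtype
  · rintro ⟨φ, hφ⟩
    obtain ⟨π, hπ, hN⟩ := P_cov Q l
    have hk : LinearMap.ker φ ≤ LinearMap.ker π := hN _ (fun h => hφ (LinearMap.ker_eq_top.1 h))
    have hs : SES (LinearMap.ker φ.rangeRestrict).subtype φ.rangeRestrict :=
      SES.of_ker (LinearMap.surjective_rangeRestrict φ)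
    obtain ⟨ψ, hψ⟩ := hs.desc π (fun a => hk (congrArg Subtype.val (show φ.rangeRestrict a.1 = 0 from a.2)))
    have hψs : Function.Surjective ψ := fun y => by
      obtain ⟨x, rfl⟩ := hπ y
      exact ⟨_, hψ x⟩
    refine ⟨(LinearMap.ker π).map φ, LinearMap.range φ, LinearMap.map_le_range, ?_⟩
    refine ⟨(Submodule.quotEquivOfEq _ _ ?_).trans (ψ.quotKerEquivOfSurjective hψs)⟩
    ext x
    obtain ⟨x, rfl⟩ := LinearMap.surjective_rangeRestrict φ x
    rw [LinearMap.mem_ker, hψ]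
    constructor
    · rintro ⟨y, hy, hyx⟩
      have : y - x ∈ LinearMap.ker π := hk (by
        rw [LinearMap.mem_ker, map_sub, sub_eq_zero]; exact hyx)
      rw [LinearMap.mem_ker, map_sub, show π y = 0 from hy, zero_sub, neg_eq_zero] at this
      exact this
    · intro hx
      exact ⟨x, hx, rfl⟩

variable (Q) in
theorem exists_L_sub [IsArtinian S M] [Nontrivial M] :
    ∃ l, ∃ f : Q.L l →ₗ[S] M, Function.Injective f := by
  obtain ⟨m, hm, -⟩ := (IsAtomic.eq_bot_or_exists_atom_le (⊤ : Submodule S M)).resolve_left top_ne_bot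
  have hsm : IsSimpleModule S m := isSimpleModule_iff_isAtom.2 hm
  obtain ⟨l, ⟨e⟩⟩ := Q.fullL (mc S m) hsm
  exact ⟨l, m.subtype ∘ₗ e.symm.toLinearMap, m.injective_subtype.comp e.symm.injective⟩

variable (Q) in
theorem exists_L_quot [Module.Finite S M] [Nontrivial M] :
    ∃ l, ∃ f : M →ₗ[S] Q.L l, Function.Surjective f := by
  obtain ⟨m, hm, -⟩ := (IsCoatomic.eq_top_or_exists_le_coatom (⊥ : Submodule S M)).resolve_left bot_ne_top
  have hsm : IsSimpleModule S (M ⧸ m) := isSimpleModule_iff_isCoatom.2 hm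
  obtain ⟨l, ⟨e⟩⟩ := Q.fullL (mc S (M ⧸ m)) hsm
  exact ⟨l, e.toLinearMap ∘ₗ m.mkQ, e.surjective.comp m.mkQ_surjective⟩

instance finP (l : Λ) : Module.Finite S (Q.P l) := by
  obtain ⟨π, hπ, hN⟩ := P_cov Q l
  obtain ⟨x, hx⟩ := exists_ne (0 : Q.L l)
  obtain ⟨h, hh⟩ := Module.projective_lifting_property π (LinearMap.toSpanSingleton S _ x) hπ
  have : LinearMap.range h = ⊤ := by
    by_contra hne
    have h1 : h 1 ∈ LinearMap.ker π := hN _ hne ⟨1, rfl⟩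
    apply hx
    have h2 := LinearMap.congr_fun hh 1
    simp only [LinearMap.comp_apply, LinearMap.toSpanSingleton_apply, one_smul] at h2
    rw [← h2]; exact h1
  exact Module.Finite.of_surjective h (LinearMap.range_eq_top.1 this)

variable (Q) in
theorem std_top (l : Λ) : ∃ (ρ : Q.P l →ₗ[S] Q.std l) (τ : Q.std l →ₗ[S] Q.L l),
    Function.Surjective ρ ∧ Function.Surjective τ ∧
    (∀ N : Submodule S (Q.std l), N ≠ ⊤ → N ≤ LinearMap.ker τ) ∧
    ∀ m, Fac Q m (Q.std l) → m ≤ l := by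
  obtain ⟨π, hπ, hN⟩ := P_cov Q l
  obtain ⟨K, ⟨e⟩, hK, hmax⟩ := Q.stdSpec l
  have hKπ : K ≤ LinearMap.ker π := by
    apply hmax
    intro m hm
    have h1 : Fac Q m (Q.P l ⧸ LinearMap.ker π) := Fac.iff_comp.1 hm
    have h2 := h1.inj (π.quotKerEquivOfSurjective hπ).toLinearMap (LinearEquiv.injective _)
    exact h2.simple.le
  have hs : SES K.subtype (e.symm.toLinearMap ∘ₗ K.mkQ) :=
    ⟨K.injective_subtype, e.symm.surjective.comp K.mkQ_surjective, by
      rw [LinearEquiv.ker_comp, Submodule.ker_mkQ, Submodule.range_subtype]⟩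
  obtain ⟨τ, hτ⟩ := hs.desc π (fun a => hKπ a.2)
  refine ⟨_, τ, hs.surj, fun y => ?_, fun N hNt x hx => ?_, fun m hm => ?_⟩
  · obtain ⟨x, rfl⟩ := hπ y
    exact ⟨_, hτ x⟩
  · obtain ⟨y, rfl⟩ := hs.surj x
    rw [LinearMap.mem_ker, hτ]
    refine hN (N.comap (e.symm.toLinearMap ∘ₗ K.mkQ)) (fun h => hNt ?_) hx
    rw [eq_top_iff]
    intro z _
    obtain ⟨w, rfl⟩ := hs.surj z
    have : w ∈ N.comap (e.symm.toLinearMap ∘ₗ K.mkQ) := by rw [h]; trivial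
    exact this
  · exact hK m (Fac.iff_comp.2 (hm.inj e.toLinearMap e.injective))

instance finStd (l : Λ) : Module.Finite S (Q.std l) := by
  obtain ⟨ρ, τ, hρ, _⟩ := std_top Q l
  exact Module.Finite.of_surjective ρ hρ

theorem std_mult {l : Λ} (τ : Q.std l →ₗ[S] Q.L l) (hτ : Function.Surjective τ) :
    ¬ Fac Q l (LinearMap.ker τ) := by
  rintro ⟨φ0, hφ0⟩
  obtain ⟨n, f, hm, h0, h1, hsim, hcard⟩ := Q.multOne l
  rw [Nat.card_eq_one_iff_unique] at hcard
  obtain ⟨hsub, ⟨⟨i, hi⟩⟩⟩ := hcard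
  have huniq : ∀ j : Fin n, Nonempty ((subquot S (f j.castSucc) (f j.succ)) ≃ₗ[S] ↥(Q.L l)) →
      j = i := fun j hj => congrArg Subtype.val (hsub.elim ⟨j, hj⟩ ⟨i, hi⟩)
  let φ : Q.P l →ₗ[S] Q.std l := (LinearMap.ker τ).subtype ∘ₗ φ0
  have hφ : φ ≠ 0 := fun h => hφ0 (by
    ext x; exact LinearMap.congr_fun h x)
  -- a step lemma
  have step : ∀ (p : Fin (n+1) → Prop), ¬ p 0 → p (Fin.last n) →
      ∃ j : Fin n, ¬ p j.castSucc ∧ p j.succ := by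
    intro p hp0 hpl
    by_contra hcon
    push Not at hcon
    have : ∀ j, ¬ p j := fun j => by
      induction j using Fin.induction with
      | zero => exact hp0
      | succ j ih => exact hcon j ih
    exact this _ hpl
  -- first: range φ
  obtain ⟨j, hj1, hj2⟩ := step (fun j => LinearMap.range φ ≤ f j) (fun h => hφ (by
      rw [h0, le_bot_iff] at h; exact LinearMap.range_eq_bot.1 h)) (by simp [h1])
  have hfac : Fac Q l (subquot S (f j.castSucc) (f j.succ)) := by
    refine ⟨Submodule.mkQ _ ∘ₗ φ.codRestrict (f j.succ) (fun x => hj2 ⟨x, rfl⟩), fun h => hj1 ?_⟩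
    rintro _ ⟨x, rfl⟩
    have := LinearMap.congr_fun h x
    simpa using this
  have hji : j = i := by
    apply huniq
    have := hsim j
    obtain ⟨m, ⟨e⟩⟩ := Q.fullL (mc S (subquot S (f j.castSucc) (f j.succ))) this
    have h2 := (hfac.inj e.toLinearMap e.injective).simple
    subst h2
    exact ⟨e⟩
  subst hji
  -- second: f not in ker τ
  obtain ⟨j', hj1', hj2'⟩ := step (fun j => ¬ f j ≤ LinearMap.ker τ) (by simp [h0]) (by
    rw [h1, top_le_iff]
    intro h
    obtain ⟨x, hx⟩ := exists_ne (0 : Q.L l)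
    obtain ⟨y, rfl⟩ := hτ x
    exact hx (by rw [LinearMap.ker_eq_top.1 h]; rfl))
  simp only [not_not] at hj1'
  have hjj : j' = j := by
    apply huniq
    have := hsim j'
    let ψ : subquot S (f j'.castSucc) (f j'.succ) →ₗ[S] Q.L l :=
      Submodule.liftQ _ (τ ∘ₗ (f j'.succ).subtype) (fun x hx => hj1' hx)
    have hψ : ψ ≠ 0 := fun h => hj2' (fun x hx => by
      have := LinearMap.congr_fun h (Submodule.Quotient.mk ⟨x, hx⟩)
      exact this)
    exact ⟨LinearEquiv.ofBijective ψ (LinearMap.bijective_of_ne_zero hψ)⟩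
  subst hjj
  -- contradiction
  have hsimp := hsim j'
  apply hj2'
  let N : Submodule S (subquot S (f j'.castSucc) (f j'.succ)) :=
    Submodule.map (Submodule.mkQ _) (Submodule.comap (f j'.succ).subtype (LinearMap.ker τ))
  have hN : N ≠ ⊥ := by
    intro h
    apply hj1
    rintro _ ⟨x, rfl⟩
    have hx : Submodule.mkQ (Submodule.comap (f j'.succ).subtype (f j'.castSucc))
        (⟨φ x, hj2 ⟨x, rfl⟩⟩ : f j'.succ) ∈ N :=
      Submodule.mem_map_of_mem (by
        show φ x ∈ LinearMap.ker τ
        exact (φ0 x).2)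
    rw [h, Submodule.mem_bot] at hx
    simpa using hx
  have hN' : N = ⊤ := (eq_bot_or_eq_top N).resolve_left hN
  intro x hx
  have hx' : Submodule.mkQ (Submodule.comap (f j'.succ).subtype (f j'.castSucc))
        (⟨x, hx⟩ : f j'.succ) ∈ N := by rw [hN']; trivial
  obtain ⟨y, hy, hyx⟩ := hx'
  have : (⟨x, hx⟩ : f j'.succ) - y ∈ Submodule.comap (f j'.succ).subtype (f j'.castSucc) := by
    rw [← Submodule.Quotient.mk_eq_zero, Submodule.Quotient.mk_sub, sub_eq_zero]; exact hyx.symm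
  have h3 : x - y ∈ LinearMap.ker τ := hj1' this
  have h4 : (y : Q.std l) ∈ LinearMap.ker τ := hy
  simpa using add_mem h3 h4

variable (Q) in
/-- presentation of the standard module -/
theorem std_pres (l : Λ) : ∃ (K : Submodule S (Q.P l)) (g : Q.P l →ₗ[S] Q.std l),
    SES K.subtype g ∧ Filt Q.std (fun m => l < m) K := by
  obtain ⟨n, f, g, hF, hle, hcard⟩ := Q.projFilt l
  rw [Nat.card_eq_one_iff_unique] at hcard
  obtain ⟨hsub, ⟨⟨i, hi⟩⟩⟩ := hcard
  have huniq : ∀ j, g j = l → j = i := fun j hj => congrArg Subtype.val (hsub.elim ⟨j, hj⟩ ⟨i, hi⟩)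
  obtain ⟨n, rfl⟩ : ∃ m, n = m + 1 := ⟨n - 1, by have := i.2; omega⟩
  obtain ⟨e⟩ := hF.2.2.2 (Fin.last n)
  have htop : f (Fin.last n).succ = ⊤ := by rw [Fin.succ_last]; exact hF.2.2.1
  let K := f (Fin.last n).castSucc
  let w : Q.P l →ₗ[S] Q.std (g (Fin.last n)) :=
    e.toLinearMap ∘ₗ Submodule.mkQ _ ∘ₗ LinearMap.codRestrict (f (Fin.last n).succ) LinearMap.id
      (fun x => by rw [htop]; trivial)
  have hw : Function.Surjective w := by
    intro y
    obtain ⟨z, hz⟩ := e.surjective y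
    obtain ⟨z, rfl⟩ := Submodule.mkQ_surjective _ z
    exact ⟨z.1, hz⟩
  have hK : LinearMap.ker w = K := by
    ext x
    simp [w, K]
  have hs : SES K.subtype w := ⟨K.injective_subtype, hw, by rw [hK, Submodule.range_subtype]⟩
  have hgl : l = g (Fin.last n) := by
    obtain ⟨ρ, τ, hρ, hτ, _⟩ := std_top Q (g (Fin.last n))
    have : Fac Q l (Q.L (g (Fin.last n))) := by
      refine ⟨τ ∘ₗ w, fun h => ?_⟩
      obtain ⟨x, hx⟩ := exists_ne (0 : Q.L (g (Fin.last n)))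
      obtain ⟨y, rfl⟩ := (hτ.comp hw) x
      exact hx (LinearMap.congr_fun h y)
    exact this.simple
  have hil := huniq _ hgl.symm
  refine ⟨K, ?_⟩
  have hfilt : Filt Q.std (fun m => l < m) K := by
    refine Filt.of_fin hF (Fin.last n).castSucc (fun j hj => lt_of_le_of_ne (hle j) ?_)
    intro hlj
    rw [huniq j hlj.symm, ← hil] at hj
    exact lt_irrefl _ hj
  have aux : ∀ m, l = m → (∃ w : Q.P l →ₗ[S] Q.std m, SES K.subtype w) →
      ∃ w : Q.P l →ₗ[S] Q.std l, SES K.subtype w := by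
    rintro _ rfl h
    exact h
  obtain ⟨w', hs'⟩ := aux _ hgl ⟨w, hs⟩
  exact ⟨w', hs', hfilt⟩

end QH
end QHPaper

namespace QHPaper
open CategoryTheory Abelian

section QH4
variable {S : Type} [Ring S] {Λ : Type} [Fintype Λ] [PartialOrder Λ] {Q : QHData S Λ}
variable {A B C M X Y : Type} [AddCommGroup A] [Module S A] [AddCommGroup B] [Module S B]
  [AddCommGroup C] [Module S C] [AddCommGroup M] [Module S M]
  [AddCommGroup X] [Module S X] [AddCommGroup Y] [Module S Y]

variable (Q) in
theorem fl_induct [IsArtinian S M] [IsNoetherian S M]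
    (Pr : ∀ (M : Type) [AddCommGroup M] [Module S M], Prop)
    (h0 : ∀ (M : Type) [AddCommGroup M] [Module S M] [Subsingleton M], Pr M)
    (hs : ∀ (A B : Type) [AddCommGroup A] [Module S A] [AddCommGroup B] [Module S B] (l : Λ)
      (f : A →ₗ[S] B) (g : B →ₗ[S] Q.L l), SES f g → Pr A → Pr B) : Pr M := by
  have key : ∀ (N : Submodule S M) (X : Type) [AddCommGroup X] [Module S X] (e : X →ₗ[S] M),
      Function.Injective e → LinearMap.range e = N → Pr X := by
    intro N
    induction N using WellFoundedLT.induction with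
    | ind N ih =>
      intro X _ _ e he hN
      rcases subsingleton_or_nontrivial X with hX | hX
      · exact h0 X
      · have : IsNoetherian S X := isNoetherian_of_injective e he
        obtain ⟨l, g, hg⟩ := exists_L_quot Q (M := X)
        refine hs _ _ l _ g (SES.of_ker hg) ?_
        refine ih (LinearMap.range (e ∘ₗ (LinearMap.ker g).subtype)) ?_ _ _
          (he.comp (Submodule.injective_subtype _)) rfl
        rw [← hN]
        refine lt_of_le_of_ne (LinearMap.range_comp_le_range _ _) ?_
        intro heq
        obtain ⟨y, hy⟩ := exists_ne (0 : Q.L l)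
        obtain ⟨x, rfl⟩ := hg y
        have : e x ∈ LinearMap.range (e ∘ₗ (LinearMap.ker g).subtype) := by rw [heq]; exact ⟨x, rfl⟩
        obtain ⟨z, hz⟩ := this
        have := he hz
        apply hy
        rw [← this]
        exact z.2
  exact key ⊤ M LinearMap.id (fun _ _ h => h) LinearMap.range_id

theorem quot_induct [IsNoetherian S Y]
    (Pr : ∀ (M : Type) [AddCommGroup M] [Module S M], Prop)
    (hs : ∀ (Y : Type) [AddCommGroup Y] [Module S Y] [IsNoetherian S Y],
      (∀ (Z : Type) [AddCommGroup Z] [Module S Z] (q : Y →ₗ[S] Z), Function.Surjective q →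
        LinearMap.ker q ≠ ⊥ → Pr Z) → Pr Y) : Pr Y := by
  have key : ∀ (N : Submodule S Y) (Z : Type) [AddCommGroup Z] [Module S Z] (q : Y →ₗ[S] Z),
      Function.Surjective q → LinearMap.ker q = N → Pr Z := by
    intro N
    induction N using WellFoundedGT.induction with
    | ind N ih =>
      intro Z _ _ q hq hN
      have : IsNoetherian S Z := isNoetherian_of_surjective q (LinearMap.range_eq_top.2 hq)
      refine hs Z (fun W _ _ r hr hk => ih (LinearMap.ker (r ∘ₗ q)) ?_ W (r ∘ₗ q) (hr.comp hq) rfl)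
      rw [← hN]
      refine lt_of_le_of_ne (LinearMap.ker_le_ker_comp _ _) ?_
      intro heq
      apply hk
      rw [eq_bot_iff]
      intro z hz
      obtain ⟨y, rfl⟩ := hq z
      have : y ∈ LinearMap.ker (r ∘ₗ q) := hz
      rw [← heq] at this
      exact this
  exact key ⊥ Y LinearMap.id (fun x => ⟨x, rfl⟩) LinearMap.ker_id

variable (Q) in
theorem finI (k : Type) [Field k] [Algebra k S] [FiniteDimensional k S] (l : Λ) :
    Module.Finite S (Q.I l) := by
  let : Module k (Q.I l) := Module.compHom _ (algebraMap k S)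
  let : Module k (Q.L l) := Module.compHom _ (algebraMap k S)
  have : IsScalarTower k S (Q.I l) := ⟨fun a s x => by
    rw [Algebra.smul_def, mul_smul]; rfl⟩
  have : IsScalarTower k S (Q.L l) := ⟨fun a s x => by
    rw [Algebra.smul_def, mul_smul]; rfl⟩
  have := Q.finiteL l
  have : Module.Finite k (Q.L l) := Module.Finite.trans S _
  obtain ⟨_, ι, hι, hess⟩ := Q.injHull l
  obtain ⟨e, he⟩ := LinearMap.exists_leftInverse_of_injective (ι.restrictScalars k)
    (LinearMap.ker_eq_bot.2 hι)
  have he' : ∀ x, e (ι x) = x := fun x => LinearMap.congr_fun he x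
  let Φ : Q.I l →ₗ[k] (S →ₗ[k] Q.L l) := LinearMap.mk₂ k (fun v s => e (s • v))
    (fun v w s => by rw [smul_add, map_add]) (fun c v s => by rw [smul_algebra_smul_comm, map_smul])
    (fun v s t => by rw [add_smul, map_add]) (fun c v s => by rw [smul_assoc, map_smul])
  let N : Submodule S (Q.I l) :=
    { carrier := {v | ∀ s : S, e (s • v) = 0}
      add_mem' := fun {a b} ha hb s => by rw [smul_add, map_add, ha, hb, add_zero]
      zero_mem' := fun s => by rw [smul_zero, map_zero]
      smul_mem' := fun c v hv s => by rw [← mul_smul]; exact hv _ }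
  have hN : N = ⊥ := by
    apply hess
    rw [eq_bot_iff]
    rintro _ ⟨h1, x, rfl⟩
    have := h1 1
    rw [one_smul, he'] at this
    rw [this, map_zero]
    exact zero_mem _
  have hΦ : Function.Injective Φ := by
    rw [← LinearMap.ker_eq_bot, eq_bot_iff]
    intro v hv
    have : v ∈ N := fun s => LinearMap.congr_fun (show Φ v = 0 from hv) s
    rw [hN] at this
    exact this
  have : Module.Finite k (Q.I l) := Module.Finite.of_injective Φ hΦ
  exact Module.Finite.of_restrictScalars_finite k S _

variable (Q) in
theorem costd_soc (μ : Λ) : ∃ (σ : Q.L μ →ₗ[S] Q.costd μ) (j : Q.costd μ →ₗ[S] Q.I μ),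
    Function.Injective σ ∧ Function.Injective j ∧
    (∀ N : Submodule S (Q.costd μ), N ≠ ⊥ → LinearMap.range σ ≤ N) ∧
    (∀ ν, Fac Q ν (Q.costd μ) → ν ≤ μ) ∧
    ∀ V' : Submodule S (Q.I μ), (∀ ν, Fac Q ν V' → ν ≤ μ) → V' ≤ LinearMap.range j := by
  obtain ⟨V, ⟨e⟩, hV, hmax⟩ := Q.costdSpec μ
  obtain ⟨_, ι, hι, hess⟩ := Q.injHull μ
  let j : Q.costd μ →ₗ[S] Q.I μ := V.subtype ∘ₗ e.toLinearMap
  have hj : Function.Injective j := V.injective_subtype.comp e.injective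
  have hjr : LinearMap.range j = V := by
    rw [LinearMap.range_comp, LinearEquiv.range, Submodule.map_top, Submodule.range_subtype]
  have hmax' : ∀ V' : Submodule S (Q.I μ), (∀ ν, Fac Q ν V' → ν ≤ μ) → V' ≤ LinearMap.range j := by
    intro V' h
    rw [hjr]
    exact hmax V' (fun m hm => h m (Fac.iff_comp.1 hm))
  have hιj : LinearMap.range ι ≤ LinearMap.range j := hmax' _ (fun ν hν =>
    (hν.inj (LinearEquiv.ofInjective ι hι).symm.toLinearMap (LinearEquiv.injective _)).simple.le)
  let σ : Q.L μ →ₗ[S] Q.costd μ := (LinearEquiv.ofInjective j hj).symm.toLinearMap ∘ₗ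
    ι.codRestrict (LinearMap.range j) (fun x => hιj ⟨x, rfl⟩)
  have hσ : ∀ x, j (σ x) = ι x := fun x =>
    congrArg Subtype.val ((LinearEquiv.ofInjective j hj).apply_symm_apply
      (ι.codRestrict (LinearMap.range j) (fun x => hιj ⟨x, rfl⟩) x))
  refine ⟨σ, j, fun x y h => hι (by rw [← hσ, ← hσ, h]), hj, fun N hN => ?_, fun ν hν =>
    hV ν (Fac.iff_comp.2 (hν.inj e.toLinearMap e.injective)), hmax'⟩
  have h1 : N.map j ⊓ LinearMap.range ι ≠ ⊥ := fun h => hN (by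
    have := hess _ h
    rw [← LinearMap.le_ker_iff_map, LinearMap.ker_eq_bot.2 hj] at this
    exact le_bot_iff.1 this)
  have h2 : (N.map j).comap ι ≠ ⊥ := by
    intro h
    apply h1
    rw [eq_bot_iff]
    rintro _ ⟨hx, x, rfl⟩
    have : x ∈ (N.map j).comap ι := hx
    rw [h, Submodule.mem_bot] at this
    rw [this, map_zero]; exact zero_mem _
  have h3 := (eq_bot_or_eq_top ((N.map j).comap ι)).resolve_left h2
  rintro _ ⟨x, rfl⟩
  have : x ∈ (N.map j).comap ι := by rw [h3]; trivial
  obtain ⟨n, hn, hnx⟩ := this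
  have : n = σ x := hj (by rw [hσ]; exact hnx)
  rw [← this]; exact hn

theorem finCostd (k : Type) [Field k] [Algebra k S] [FiniteDimensional k S] (l : Λ) :
    Module.Finite S (Q.costd l) := by
  have := finI Q k l
  have : IsNoetherianRing S := IsNoetherianRing.of_finite k S
  obtain ⟨_, j, _, hj, _⟩ := costd_soc Q l
  exact Module.Finite.of_injective j hj

theorem EV1_costd {μ : Λ} (hX : ∀ ν, Fac Q ν X → ν ≤ μ) : EV S 1 X (Q.costd μ) := by
  obtain ⟨_, j, _, hj, _, hf, hmax⟩ := costd_soc Q μ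
  have hs := SES.of_range hj
  refine EV.co_left hs (EV.inj 0) (EV.zero_of_hom fun φ => ?_)
  let V' := (LinearMap.range φ).comap (LinearMap.range j).mkQ
  have hjV : ∀ x, j x ∈ V' := fun x => by
    show (LinearMap.range j).mkQ (j x) ∈ LinearMap.range φ
    rw [hs.comp_zero]; exact zero_mem _
  have hs' : SES (j.codRestrict V' hjV)
      (((LinearMap.range j).mkQ ∘ₗ V'.subtype).codRestrict (LinearMap.range φ) (fun x => x.2)) := by
    refine ⟨fun x y h => hj (congrArg Subtype.val h), ?_, ?_⟩
    · rintro ⟨y, hy⟩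
      obtain ⟨x, rfl⟩ := hs.surj y
      exact ⟨⟨x, hy⟩, rfl⟩
    · ext ⟨x, hx⟩
      constructor
      · rintro ⟨y, hy⟩
        have : j y = x := congrArg Subtype.val hy
        apply Subtype.ext
        show (LinearMap.range j).mkQ x = 0
        rw [← this, hs.comp_zero]
      · intro h
        obtain ⟨a, ha⟩ := hs.lift (b := x) (congrArg Subtype.val h)
        exact ⟨a, Subtype.ext ha⟩
  have hV' : V' ≤ LinearMap.range j := hmax V' (fun ν hν => by
    rcases Fac.ext hs' hν with h | h
    · exact hf ν h
    · exact hX ν (h.surj φ.rangeRestrict φ.surjective_rangeRestrict))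
  ext x
  obtain ⟨y, hy⟩ := hs.surj (φ x)
  have : y ∈ V' := by show (LinearMap.range j).mkQ y ∈ LinearMap.range φ; rw [hy]; exact ⟨x, rfl⟩
  obtain ⟨z, rfl⟩ := hV' this
  rw [← hy, hs.comp_zero]; rfl

theorem Filt.hom_zero {K : Type} [AddCommGroup K] [Module S K] {p : Λ → Prop}
    (hK : Filt Q.std p K) (hX : ∀ ν, p ν → ¬ Fac Q ν X) (φ : K →ₗ[S] X) : φ = 0 := by
  induction hK with
  | zero => ext x; rw [Subsingleton.elim x 0, map_zero, map_zero]
  | step i hi f g h _ ih =>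
    have h0 := ih (φ ∘ₗ f)
    obtain ⟨ψ, hψ⟩ := h.desc φ (fun a => LinearMap.congr_fun h0 a)
    obtain ⟨ρ, _, hρ, _⟩ := std_top Q i
    have h1 : ψ ∘ₗ ρ = 0 := by
      by_contra hne
      exact hX i hi ⟨_, hne⟩
    ext b
    obtain ⟨p, hp⟩ := hρ (g b)
    rw [← hψ, ← hp]
    exact LinearMap.congr_fun h1 p

theorem EV1_std {l : Λ} (hX : ∀ ν, l < ν → ¬ Fac Q ν X) : EV S 1 (Q.std l) X := by
  obtain ⟨K, g, hs, hK⟩ := std_pres Q l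
  exact EV.contra_right hs (EV.zero_of_hom (hK.hom_zero hX)) (EV.proj 0)

theorem EV1_std_costd (l m : Λ) : EV S 1 (Q.std l) (Q.costd m) := by
  by_cases h : l ≤ m
  · obtain ⟨_, _, _, _, _, hf⟩ := std_top Q l
    exact EV1_costd (fun ν hν => (hf ν hν).trans h)
  · obtain ⟨_, _, _, _, _, hf, _⟩ := costd_soc Q m
    exact EV1_std (fun ν hν hF => h (hν.le.trans (hf ν hF)))

theorem Filt.EV_src {p : Λ → Prop} {n : ℕ} (hA : Filt Q.std p A)
    (h : ∀ l, p l → EV S n (Q.std l) Y) : EV S n A Y := by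
  induction hA with
  | zero => exact EV.of_sub_src n
  | step i hi f g hs _ ih => exact EV.contra_mid hs ih (h i hi)

theorem Filt.EV_tgt {p : Λ → Prop} {n : ℕ} {D : Λ → ModuleCat.{0} S} (hA : Filt D p A)
    (h : ∀ l, p l → EV S n X (D l)) : EV S n X A := by
  induction hA with
  | zero => exact EV.of_sub_tgt n
  | step i hi f g hs _ ih => exact EV.co_mid hs ih (h i hi)

theorem EV2_std_costd (l m : Λ) : EV S 2 (Q.std l) (Q.costd m) := by
  obtain ⟨K, g, hs, hK⟩ := std_pres Q l
  exact EV.contra_right hs (hK.EV_src (fun i _ => EV1_std_costd i m)) (EV.proj 1)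

theorem costd_quot {μ : Λ} {σ : Q.L μ →ₗ[S] Q.costd μ} (hσ : Function.Injective σ)
    (hess : ∀ N : Submodule S (Q.costd μ), N ≠ ⊥ → LinearMap.range σ ≤ N)
    (hf : ∀ ν, Fac Q ν (Q.costd μ) → ν ≤ μ) (ν : Λ)
    (h : Fac Q ν (Q.costd μ ⧸ LinearMap.range σ)) : ν < μ := by
  refine lt_of_le_of_ne (hf ν (h.surj _ (Submodule.mkQ_surjective _))) ?_
  rintro rfl
  obtain ⟨φ, hφ⟩ := h
  obtain ⟨ψ, hψ⟩ := Module.projective_lifting_property (LinearMap.range σ).mkQ φ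
    (Submodule.mkQ_surjective _)
  obtain ⟨K, g, hs, hK⟩ := std_pres Q ν
  have h0 := hK.hom_zero (fun m hm hF => absurd (hf m hF) (not_le_of_gt hm)) (ψ ∘ₗ K.subtype)
  obtain ⟨χ, hχ⟩ := hs.desc ψ (fun a => LinearMap.congr_fun h0 a)
  obtain ⟨_, τ, _, hτ, hN, _⟩ := std_top Q ν
  have h1 : ∀ x, τ x = 0 → χ x = 0 := by
    by_contra hcon
    push Not at hcon
    obtain ⟨x, hx, hx'⟩ := hcon
    have h2 : (LinearMap.ker τ).map χ ≠ ⊥ := fun h => hx' (by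
      have : χ x ∈ (LinearMap.ker τ).map χ := Submodule.mem_map_of_mem hx
      rwa [h] at this)
    have h3 := hess _ h2
    have h4 : Fac Q ν ((LinearMap.ker τ).map χ) :=
      ((Fac.self ν).inj (σ.codRestrict _ (fun x => h3 ⟨x, rfl⟩)) (fun x y h =>
        hσ (congrArg Subtype.val h)))
    refine std_mult τ hτ (h4.surj ((χ ∘ₗ (LinearMap.ker τ).subtype).codRestrict _
      (fun x => Submodule.mem_map_of_mem x.2)) ?_)
    rintro ⟨_, y, hy, rfl⟩
    exact ⟨⟨y, hy⟩, rfl⟩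
  obtain ⟨ω, hω⟩ := (SES.of_ker hτ).desc χ (fun a => h1 _ a.2)
  -- range ω ≤ range σ
  have hχ0 : ∃ x, χ x ≠ 0 := by
    by_contra hcon
    push Not at hcon
    apply hφ
    ext p
    rw [← hψ]
    show (LinearMap.range σ).mkQ (ψ p) = 0
    rw [← hχ, hcon, map_zero]
  have hω0 : LinearMap.range ω ≠ ⊥ := by
    obtain ⟨x, hx⟩ := hχ0
    intro h
    apply hx
    rw [← hω, LinearMap.range_eq_bot.1 h]; rfl
  have h5 := hess _ hω0
  have h6 : (LinearMap.range σ).comap ω = ⊤ := by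
    refine (eq_bot_or_eq_top _).resolve_left (fun h => ?_)
    obtain ⟨x, hx⟩ := exists_ne (0 : Q.L ν)
    obtain ⟨y, hy⟩ := h5 ⟨x, rfl⟩
    have : y ∈ (LinearMap.range σ).comap ω := ⟨x, hy.symm⟩
    rw [h, Submodule.mem_bot] at this
    rw [this, map_zero] at hy
    exact hx (hσ (by rw [← hy, map_zero]))
  apply hφ
  ext p
  rw [← hψ]
  show (LinearMap.range σ).mkQ (ψ p) = 0
  rw [← hχ, ← hω]
  have : τ (g p) ∈ (LinearMap.range σ).comap ω := by rw [h6]; trivial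
  simpa using this

end QH4
end QHPaper

namespace QHPaper
open CategoryTheory Abelian

section QH5
variable {S : Type} [Ring S] {Λ : Type} [Fintype Λ] [PartialOrder Λ] {Q : QHData S Λ}
variable {A B C M X Y : Type} [AddCommGroup A] [Module S A] [AddCommGroup B] [Module S B]
  [AddCommGroup C] [Module S C] [AddCommGroup M] [Module S M]
  [AddCommGroup X] [Module S X] [AddCommGroup Y] [Module S Y]

theorem costd_crit [IsArtinianRing S] [IsNoetherianRing S]
    (hfin : ∀ l, Module.Finite S (Q.costd l)) [Module.Finite S Y]
    (hY : ∀ l, EV S 1 (Q.std l) Y) : Filt Q.costd (fun _ => True) Y := by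
  refine quot_induct (S := S) (Y := Y)
    (fun Y _ _ => (∀ l, EV S 1 (Q.std l) Y) → Filt Q.costd (fun _ => True) Y) ?_ hY
  intro Y _ _ _ ih hY
  rcases subsingleton_or_nontrivial Y with hs | hs
  · exact .zero
  obtain ⟨l0, hl0⟩ := exists_L_sub Q (M := Y)
  obtain ⟨μ, ⟨s, hsinj⟩, hmin⟩ := exists_minimal_of_wellFoundedLT
    (fun l => ∃ f : Q.L l →ₗ[S] Y, Function.Injective f) ⟨l0, hl0⟩
  have hom0 : ∀ (Z : Type) [AddCommGroup Z] [Module S Z], (∀ ν, Fac Q ν Z → ν < μ) →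
      ∀ φ : Z →ₗ[S] Y, φ = 0 := by
    intro Z _ _ hZ φ
    by_contra hne
    have : Nontrivial (LinearMap.range φ) := by
      rw [Submodule.nontrivial_iff_ne_bot]
      exact fun h => hne (LinearMap.range_eq_bot.1 h)
    obtain ⟨ν, f, hf⟩ := exists_L_sub Q (M := LinearMap.range φ)
    have h1 := hZ ν (((Fac.self ν).inj f hf).surj φ.rangeRestrict φ.surjective_rangeRestrict)
    exact absurd (hmin ⟨(LinearMap.range φ).subtype ∘ₗ f,
      (Submodule.injective_subtype _).comp hf⟩ h1.le) (not_le_of_gt h1)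
  have hL : ∀ ν, ν < μ → EV S 1 (Q.L ν) Y := by
    intro ν hν
    obtain ⟨_, τ, _, hτ, _, hf⟩ := std_top Q ν
    exact EV.contra_right (SES.of_ker hτ) (EV.zero_of_hom (hom0 _ (fun m hm =>
      lt_of_le_of_lt (hf m (hm.inj _ (Submodule.injective_subtype _))) hν))) (hY ν)
  obtain ⟨σ, _, hσ, _, hess, hf, _⟩ := costd_soc Q μ
  have hq : EV S 1 (Q.costd μ ⧸ LinearMap.range σ) Y := by
    have := hfin μ
    refine fl_induct Q (M := Q.costd μ ⧸ LinearMap.range σ)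
      (fun Z _ _ => (∀ ν, Fac Q ν Z → ν < μ) → EV S 1 Z Y) ?_ ?_ (costd_quot hσ hess hf)
    · intro Z _ _ _ _
      exact EV.of_sub_src 1
    · intro A B _ _ _ _ l f g h hA hB
      exact EV.contra_mid h (hA (fun ν hν => hB ν (hν.inj f h.inj)))
        (hL l (hB l ((Fac.self l).surj g h.surj)))
  obtain ⟨ψ, hψ⟩ := EV.extend (SES.of_range hσ) hq s
  have hψi : Function.Injective ψ := by
    rw [← LinearMap.ker_eq_bot]
    by_contra hne
    have h1 := hess _ hne
    obtain ⟨x, hx⟩ := exists_ne (0 : Q.L μ)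
    apply hx
    apply hsinj
    rw [← hψ, map_zero]
    exact h1 ⟨x, rfl⟩
  have hses := SES.of_range hψi
  refine Filt.ext hses (Filt.single μ trivial) (ih _ _ hses.surj ?_ (fun l =>
    EV.co_right hses (hY l) (EV2_std_costd l μ)))
  rw [← hses.exact]
  intro h
  obtain ⟨x, hx⟩ := exists_ne (0 : Q.L μ)
  apply hx
  apply hsinj
  rw [← hψ, map_zero, LinearMap.range_eq_bot.1 h]; rfl

theorem SES.finite [IsNoetherianRing S] {f : A →ₗ[S] B} {g : B →ₗ[S] C} (h : SES f g)
    [Module.Finite S A] [Module.Finite S C] : Module.Finite S B := by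
  have : IsNoetherian S B := isNoetherian_of_range_eq_ker f g h.exact
  infer_instance

theorem Filt.finite [IsNoetherianRing S] {D : Λ → ModuleCat.{0} S} {p : Λ → Prop}
    (hD : ∀ l, Module.Finite S (D l)) (hA : Filt D p A) : Module.Finite S A := by
  induction hA with
  | zero => infer_instance
  | step i hi f g h _ ih =>
    have := hD i
    exact h.finite

theorem costd_coker [IsArtinianRing S] [IsNoetherianRing S]
    (hfin : ∀ l, Module.Finite S (Q.costd l)) {f : A →ₗ[S] B} {g : B →ₗ[S] C} (h : SES f g)
    (hA : Filt Q.costd (fun _ => True) A) (hB : Filt Q.costd (fun _ => True) B) :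
    Filt Q.costd (fun _ => True) C := by
  have := hB.finite hfin
  have : Module.Finite S C := Module.Finite.of_surjective g h.surj
  exact costd_crit hfin (fun l => EV.co_right h (hB.EV_tgt (fun m _ => EV1_std_costd l m))
    (hA.EV_tgt (fun m _ => EV2_std_costd l m)))

/-- pushouts -/
theorem pushout {i : A →ₗ[S] B} {q : B →ₗ[S] C} (h : SES i q) (j : A →ₗ[S] M) :
    ∃ (E : ModuleCat.{0} S) (u : B →ₗ[S] E) (v : M →ₗ[S] E) (q' : E →ₗ[S] C),
      (∀ a, u (i a) = v (j a)) ∧ SES v q' ∧ (∀ b, q' (u b) = q b) ∧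
      (∀ e, ∃ b m, e = u b + v m) ∧ (∀ b, u b = 0 → ∃ a, i a = b ∧ j a = 0) := by
  let R : Submodule S (B × M) := LinearMap.range (LinearMap.prod i (-j))
  let u : B →ₗ[S] (B × M) ⧸ R := R.mkQ ∘ₗ LinearMap.inl S B M
  let v : M →ₗ[S] (B × M) ⧸ R := R.mkQ ∘ₗ LinearMap.inr S B M
  let q' : (B × M) ⧸ R →ₗ[S] C := R.liftQ (q ∘ₗ LinearMap.fst S B M) (by
    rintro _ ⟨a, rfl⟩
    exact h.comp_zero a)
  have hrep : ∀ e, ∃ b m, e = u b + v m := by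
    intro e
    obtain ⟨⟨b, m⟩, rfl⟩ := R.mkQ_surjective e
    refine ⟨b, m, ?_⟩
    show _ = R.mkQ (b, 0) + R.mkQ (0, m)
    rw [← map_add]; simp
  have hq'u : ∀ b, q' (u b) = q b := fun b => rfl
  have hq'v : ∀ m, q' (v m) = 0 := fun m => map_zero q
  have hcomm : ∀ a, u (i a) = v (j a) := by
    intro a
    rw [← sub_eq_zero]
    show R.mkQ (i a, 0) - R.mkQ (0, j a) = 0
    rw [← map_sub]
    simp only [Submodule.mkQ_apply, Submodule.Quotient.mk_eq_zero]
    exact ⟨a, by simp⟩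
  refine ⟨mc S ((B × M) ⧸ R), u, v, q', hcomm, ⟨?_, ?_, ?_⟩, hq'u, hrep, ?_⟩
  · rw [← LinearMap.ker_eq_bot, eq_bot_iff]
    intro m hm
    have : (0, m) ∈ R := by
      rw [← Submodule.Quotient.mk_eq_zero]; exact hm
    obtain ⟨a, ha⟩ := this
    have h1 : i a = 0 := congrArg Prod.fst ha
    have h2 : - j a = m := congrArg Prod.snd ha
    have h3 : a = 0 := h.inj (by rw [h1, map_zero])
    rw [← h2, h3]; simp
  · intro c
    obtain ⟨b, rfl⟩ := h.surj c
    exact ⟨u b, rfl⟩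
  · ext e
    constructor
    · rintro ⟨m, rfl⟩
      exact hq'v m
    · intro he
      obtain ⟨b, m, rfl⟩ := hrep e
      rw [LinearMap.mem_ker, map_add, hq'u, hq'v, add_zero] at he
      obtain ⟨a, rfl⟩ := h.lift he
      exact ⟨j a + m, by rw [map_add, hcomm]⟩
  · intro b hb
    have : (b, 0) ∈ R := by
      rw [← Submodule.Quotient.mk_eq_zero]; exact hb
    obtain ⟨a, ha⟩ := this
    have h1 : i a = b := congrArg Prod.fst ha
    have h2 : - j a = 0 := congrArg Prod.snd ha
    exact ⟨a, h1, by simpa using h2⟩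

theorem hom_span (k : Type) [Field k] [Algebra k S] [FiniteDimensional k S]
    [Module.Finite S A] [Module.Finite S X] :
    ∃ (m : ℕ) (h : Fin m → A →ₗ[S] X), ∀ φ : A →ₗ[S] X, ∃ c : Fin m → k,
      ∀ x, φ x = ∑ i, algebraMap k S (c i) • h i x := by
  let : Module k A := Module.compHom _ (algebraMap k S)
  let : Module k X := Module.compHom _ (algebraMap k S)
  have : IsScalarTower k S A := ⟨fun a s x => by rw [Algebra.smul_def, mul_smul]; rfl⟩
  have : IsScalarTower k S X := ⟨fun a s x => by rw [Algebra.smul_def, mul_smul]; rfl⟩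
  have : Module.Finite k A := Module.Finite.trans S _
  have : Module.Finite k X := Module.Finite.trans S _
  have : Module.Finite k (A →ₗ[S] X) :=
    Module.Finite.of_injective (LinearMap.restrictScalarsₗ k S A X k)
      (LinearMap.restrictScalars_injective k)
  obtain ⟨m, h, hh⟩ := Module.Finite.exists_fin (R := k) (M := A →ₗ[S] X)
  refine ⟨m, h, fun φ => ?_⟩
  have : φ ∈ Submodule.span k (Set.range h) := by rw [hh]; trivial
  obtain ⟨c, hc⟩ := (Submodule.mem_span_range_iff_exists_fun k).1 this
  refine ⟨c, fun x => ?_⟩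
  rw [← hc]
  simp only [LinearMap.sum_apply, LinearMap.smul_apply]
  rfl

theorem SES.pi {f : A →ₗ[S] B} {g : B →ₗ[S] C} (h : SES f g) (m : ℕ) :
    SES (f.compLeft (Fin m)) (g.compLeft (Fin m)) := by
  refine ⟨fun x y hxy => funext fun i => h.inj (congrFun hxy i), fun y => ?_, ?_⟩
  · choose x hx using fun i => h.surj (y i)
    exact ⟨x, funext hx⟩
  · ext b
    constructor
    · rintro ⟨a, rfl⟩
      exact funext fun i => h.comp_zero (a i)
    · intro hb
      choose a ha using fun i => h.lift (b := b i) (congrFun hb i)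
      exact ⟨a, funext ha⟩

theorem Filt.pi {D : Λ → ModuleCat.{0} S} {p : Λ → Prop} {l : Λ} (hl : p l) (m : ℕ) :
    Filt D p (Fin m → D l) := by
  induction m with
  | zero => exact .zero
  | succ m ih =>
    let f : (Fin m → D l) →ₗ[S] (Fin (m+1) → D l) :=
      { toFun := fun x => Fin.cons (0 : D l) x
        map_add' := fun x y => by
          ext i; refine Fin.cases ?_ (fun i => ?_) i <;> simp
        map_smul' := fun c x => by
          ext i; refine Fin.cases ?_ (fun i => ?_) i <;> simp }
    refine .step l hl f (LinearMap.proj 0) ⟨?_, ?_, ?_⟩ ih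
    · intro x y h
      exact funext fun i => congrFun h i.succ
    · intro y
      exact ⟨fun _ => y, rfl⟩
    · ext b
      constructor
      · rintro ⟨a, rfl⟩
        rfl
      · intro hb
        refine ⟨Fin.tail b, ?_⟩
        have : b 0 = 0 := hb
        show Fin.cons 0 (Fin.tail b) = b
        rw [← this, Fin.cons_self_tail]

theorem univ_ext (k : Type) [Field k] [Algebra k S] [FiniteDimensional k S]
    [Module.Finite S X] (l : Λ) :
    ∃ (X' C : ModuleCat.{0} S) (v : X →ₗ[S] X') (q : X' →ₗ[S] C), SES v q ∧
      Filt Q.std (fun m => m = l) C ∧ EV S 1 (Q.std l) X' := by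
  have : IsNoetherianRing S := IsNoetherianRing.of_finite k S
  obtain ⟨K, g, hs, hK⟩ := std_pres Q l
  obtain ⟨m, h, hh⟩ := hom_span (S := S) (A := K) (X := X) k
  obtain ⟨E, u, v, q, hcomm, hE, hqu, -, -⟩ := pushout (hs.pi m)
    (∑ i, (h i) ∘ₗ LinearMap.proj i : (Fin m → K) →ₗ[S] X)
  refine ⟨E, mc S (Fin m → Q.std l), v, q, hE, Filt.pi (p := fun m => m = l) rfl m, ?_⟩
  refine EV.of_extend hs (EV.proj 0) (fun φ => ?_)
  have hz : ∀ x, q (φ x) = 0 := by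
    intro x
    funext i
    have := hK.hom_zero (X := Q.std l) (fun ν hν hF => by
      obtain ⟨_, _, _, _, _, hf⟩ := std_top Q l
      exact absurd (hf ν hF) (not_le_of_gt hν)) (LinearMap.proj i ∘ₗ q ∘ₗ φ)
    exact LinearMap.congr_fun this x
  let φ' : K →ₗ[S] X := (LinearEquiv.ofInjective v hE.inj).symm.toLinearMap ∘ₗ
    φ.codRestrict (LinearMap.range v) (fun x => by rw [hE.exact]; exact hz x)
  have hφ' : ∀ x, v (φ' x) = φ x := fun x => congrArg Subtype.val
    ((LinearEquiv.ofInjective v hE.inj).apply_symm_apply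
      (φ.codRestrict (LinearMap.range v) (fun x => by rw [hE.exact]; exact hz x) x))
  obtain ⟨c, hc⟩ := hh φ'
  let D : Q.P l →ₗ[S] (Fin m → Q.P l) :=
    { toFun := fun p i => algebraMap k S (c i) • p
      map_add' := fun x y => by ext i; simp
      map_smul' := fun s x => by
        funext i
        simp only [Pi.smul_apply, RingHom.id_apply, ← mul_smul, Algebra.commutes] }
  refine ⟨u ∘ₗ D, fun a => ?_⟩
  have h1 : D (K.subtype a) = K.subtype.compLeft (Fin m) (fun i => algebraMap k S (c i) • a) := rfl
  rw [LinearMap.comp_apply, h1, hcomm, ← hφ', hc]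
  simp

theorem SES.trans {D T : Type} [AddCommGroup D] [Module S D] [AddCommGroup T] [Module S T]
    {f : A →ₗ[S] B} {g : B →ₗ[S] C} (h : SES f g) {f' : B →ₗ[S] T} {g' : T →ₗ[S] D}
    (h' : SES f' g') : ∃ (E : ModuleCat.{0} S) (w : T →ₗ[S] E) (c : C →ₗ[S] E) (d : E →ₗ[S] D),
      SES (f' ∘ₗ f) w ∧ SES c d := by
  obtain ⟨E, u, v, q, hcomm, hE, hqu, hrep, hker⟩ := pushout h' g
  refine ⟨E, u, v, q, ⟨h'.inj.comp h.inj, ?_, ?_⟩, hE⟩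
  · intro e
    obtain ⟨b, m, rfl⟩ := hrep e
    obtain ⟨y, rfl⟩ := h.surj m
    exact ⟨b + f' y, by rw [map_add, hcomm]⟩
  · ext t
    constructor
    · rintro ⟨a, rfl⟩
      show u (f' (f a)) = 0
      rw [hcomm, h.comp_zero, map_zero]
    · intro ht
      obtain ⟨b, rfl, hb⟩ := hker t ht
      obtain ⟨a, rfl⟩ := h.lift hb
      exact ⟨a, rfl⟩

theorem embed_aux (k : Type) [Field k] [Algebra k S] [FiniteDimensional k S] (V : Finset Λ) :
    ∀ (X : Type) [AddCommGroup X] [Module S X] [Module.Finite S X],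
      (∀ x ∈ V, ∀ y, y ≤ x → y ∈ V) → (∀ m, m ∉ V → EV S 1 (Q.std m) X) →
      ∃ (T C : ModuleCat.{0} S) (f : X →ₗ[S] T) (g : T →ₗ[S] C), SES f g ∧
        Filt Q.std (fun _ => True) C ∧ ∀ m, EV S 1 (Q.std m) T := by
  classical
  have : IsNoetherianRing S := IsNoetherianRing.of_finite k S
  induction V using Finset.strongInduction with
  | H V ih =>
    intro X _ _ _ hV hX
    rcases V.eq_empty_or_nonempty with rfl | hne
    · exact ⟨mc S X, mc S PUnit, LinearMap.id, 0, ⟨fun _ _ h => h,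
        fun _ => ⟨0, Subsingleton.elim _ _⟩, by rw [LinearMap.range_id, LinearMap.ker_zero]⟩,
        .zero, fun m => hX m (by simp)⟩
    · obtain ⟨l, hl⟩ := V.exists_maximal hne
      obtain ⟨X', C, v, q, hs, hC, hE⟩ := univ_ext (Q := Q) (X := X) k l
      have : Module.Finite S C := hC.finite (fun _ => inferInstance)
      have : Module.Finite S X' := hs.finite
      obtain ⟨T, C', f, g, hs', hC', hT⟩ := ih (V.erase l) (Finset.erase_ssubset hl.1) X' (by
        intro x hx y hy
        rw [Finset.mem_erase] at hx ⊢
        refine ⟨?_, hV x hx.2 y hy⟩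
        rintro rfl
        exact hx.1 (le_antisymm (hl.2 hx.2 hy) hy)) (by
        intro m hm
        by_cases hml : m = l
        · rw [hml]; exact hE
        · have hmV : m ∉ V := fun h => hm (Finset.mem_erase.2 ⟨hml, h⟩)
          refine EV.co_mid hs (hX m hmV) (hC.EV_tgt ?_)
          intro l' hl'
          refine EV1_std (fun ν hν hF => ?_)
          obtain ⟨_, _, _, _, _, hf⟩ := std_top Q l'
          exact hmV (hV _ hl.1 _ (hν.le.trans ((hf ν hF).trans hl'.le))))
      obtain ⟨E, w, c, d, h1, h2⟩ := hs.trans hs'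
      exact ⟨T, E, _, w, h1, Filt.ext h2 (hC.mono (fun _ _ => trivial)) hC', hT⟩

variable (Q) in
def Std (M : Type) [AddCommGroup M] [Module S M] : Prop := Filt Q.std (fun _ => True) M
variable (Q) in
def Cos (M : Type) [AddCommGroup M] [Module S M] : Prop := Filt Q.costd (fun _ => True) M
variable (Q) in
def Tilt (M : Type) [AddCommGroup M] [Module S M] : Prop := Std Q M ∧ Cos Q M

theorem embed (k : Type) [Field k] [Algebra k S] [FiniteDimensional k S] (hX : Std Q X) :
    ∃ (T C : ModuleCat.{0} S) (f : X →ₗ[S] T) (g : T →ₗ[S] C), SES f g ∧ Std Q C ∧ Tilt Q T := by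
  have : IsNoetherianRing S := IsNoetherianRing.of_finite k S
  have : IsArtinianRing S := IsArtinianRing.of_finite k S
  have : Module.Finite S X := Filt.finite (fun _ => inferInstance) hX
  obtain ⟨T, C, f, g, h, hC, hT⟩ := embed_aux (Q := Q) k Finset.univ X (by simp) (by simp)
  have : Module.Finite S C := Filt.finite (fun _ => inferInstance) hC
  have : Module.Finite S T := h.finite
  exact ⟨T, C, f, g, h, hC, Filt.ext h hX hC, costd_crit (fun l => finCostd k l) hT⟩

/-- the pushout step -/
theorem push_step (k : Type) [Field k] [Algebra k S] [FiniteDimensional k S]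
    {A0 : Type} [AddCommGroup A0] [Module S A0]
    (hA : Std Q A) (j : A →ₗ[S] A0) (p : A0 →ₗ[S] M)
    (hp : Function.Surjective p) (hjp : LinearMap.range j = LinearMap.ker p) (hA0 : Std Q A0) :
    ∃ (T E : ModuleCat.{0} S) (i : A →ₗ[S] T) (u : T →ₗ[S] E) (w : E →ₗ[S] M),
      Function.Injective i ∧ Tilt Q T ∧ Std Q E ∧ Function.Surjective w ∧
      LinearMap.range u = LinearMap.ker w ∧ ∀ t, u t = 0 ↔ ∃ a, j a = 0 ∧ i a = t := by
  obtain ⟨T, C, i, q, hs, hC, hT⟩ := embed k hA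
  obtain ⟨E, u, v, q', hcomm, hE, hqu, hrep, hker⟩ := pushout hs j
  have hjp0 : ∀ a, p (j a) = 0 := fun a => by
    have : j a ∈ LinearMap.ker p := by rw [← hjp]; exact ⟨a, rfl⟩
    exact this
  -- the map to M
  let F : T × A0 →ₗ[S] E := u.coprod v
  have hF : Function.Surjective F := fun e => by
    obtain ⟨b, m, rfl⟩ := hrep e
    exact ⟨(b, m), rfl⟩
  obtain ⟨w, hw⟩ := (SES.of_ker hF).desc (p ∘ₗ LinearMap.snd S T A0) (by
    rintro ⟨⟨t, m⟩, hx⟩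
    have hx' : u t + v m = 0 := hx
    have hq : q t = 0 := by
      have := congrArg q' hx'
      rwa [map_add, hqu, hE.comp_zero, add_zero, map_zero] at this
    obtain ⟨a, rfl⟩ := hs.lift hq
    rw [hcomm, ← map_add] at hx'
    have h2 : j a + m = 0 := hE.inj (by rw [hx', map_zero])
    show p m = 0
    have h3 := congrArg p h2
    rwa [map_add, hjp0, zero_add, map_zero] at h3)
  have hw' : ∀ t m, w (u t + v m) = p m := fun t m => hw (t, m)
  refine ⟨T, E, i, u, w, hs.inj, hT, Filt.ext hE hA0 hC, ?_, ?_, ?_⟩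
  · intro y
    obtain ⟨x, rfl⟩ := hp y
    exact ⟨u 0 + v x, hw' 0 x⟩
  · ext e
    constructor
    · rintro ⟨t, rfl⟩
      have := hw' t 0
      rwa [map_zero, map_zero, add_zero] at this
    · intro he
      obtain ⟨t, m, rfl⟩ := hrep e
      rw [LinearMap.mem_ker, hw'] at he
      have : m ∈ LinearMap.range j := by rw [hjp]; exact he
      obtain ⟨a, rfl⟩ := this
      exact ⟨t + i a, by rw [map_add, hcomm]⟩
  · intro t
    constructor
    · intro ht
      obtain ⟨a, h1, h2⟩ := hker t ht
      exact ⟨a, h2, h1⟩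
    · rintro ⟨a, h1, rfl⟩
      rw [hcomm, h1, map_zero]

theorem Tilt.equiv (e : A ≃ₗ[S] B) (h : Tilt Q A) : Tilt Q B :=
  ⟨Filt.equiv e h.1, Filt.equiv e h.2⟩

theorem lemmaA (k : Type) [Field k] [Algebra k S] [FiniteDimensional k S] (d : ℕ) :
    ∀ (M : ModuleCat.{0} S), Res (Std Q) (d+1) M → ∃ (B A : ModuleCat.{0} S) (f : B →ₗ[S] A)
      (g : A →ₗ[S] M), SES f g ∧ Std Q A ∧ Res (Tilt Q) d B := by
  induction d with
  | zero =>
    rintro M ⟨B0, A0, f, g, h, hA0, hB0⟩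
    obtain ⟨T, E, i, u, w, hi, hT, hE, hw, huw, hu⟩ :=
      push_step (M := M) k (show Std Q B0 from hB0) f g h.surj h.exact hA0
    refine ⟨T, E, u, w, ⟨?_, hw, huw⟩, hE, hT⟩
    rw [← LinearMap.ker_eq_bot, eq_bot_iff]
    intro t ht
    obtain ⟨a, ha, rfl⟩ := (hu t).1 ht
    have : a = 0 := h.inj (by rw [ha, map_zero])
    rw [this, map_zero]; exact zero_mem _
  | succ d ih =>
    rintro M ⟨B0, A0, f, g, h, hA0, hB0⟩
    obtain ⟨B', A', f', g', h', hA', hB'⟩ := ih B0 hB0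
    obtain ⟨T, E, i, u, w, hi, hT, hE, hw, huw, hu⟩ :=
      push_step (M := M) k hA' (f ∘ₗ g') g h.surj (by
        rw [LinearMap.range_comp, LinearMap.range_eq_top.2 h'.surj, Submodule.map_top, h.exact]) hA0
    refine ⟨mc S (LinearMap.range u), E, (LinearMap.range u).subtype, w,
      ⟨Submodule.injective_subtype _, hw, by rw [Submodule.range_subtype, huw]⟩, hE, ?_⟩
    refine ⟨B', T, i ∘ₗ f', u.rangeRestrict, ⟨hi.comp h'.inj, u.surjective_rangeRestrict, ?_⟩,
      hT, hB'⟩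
    rw [LinearMap.ker_rangeRestrict]
    ext t
    rw [LinearMap.mem_ker, hu]
    constructor
    · rintro ⟨b, rfl⟩
      exact ⟨f' b, by simp [h'.comp_zero], rfl⟩
    · rintro ⟨a, ha, rfl⟩
      have : g' a = 0 := h.inj (by rw [map_zero]; exact ha)
      obtain ⟨b, rfl⟩ := h'.lift this
      exact ⟨b, rfl⟩

theorem lemmaB (k : Type) [Field k] [Algebra k S] [FiniteDimensional k S] (d : ℕ) :
    ∀ (M : ModuleCat.{0} S), Res (Tilt Q) d M → Cos Q M := by
  have : IsNoetherianRing S := IsNoetherianRing.of_finite k S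
  have : IsArtinianRing S := IsArtinianRing.of_finite k S
  induction d with
  | zero => exact fun M h => h.2
  | succ d ih =>
    rintro M ⟨B, A, f, g, h, hA, hB⟩
    exact costd_coker (fun l => finCostd k l) h (ih B hB) hA.2

theorem res_tilt (k : Type) [Field k] [Algebra k S] [FiniteDimensional k S] (d : ℕ)
    (M : ModuleCat.{0} S) (hM : Cos Q M) (h : Res (Std Q) d M) : Res (Tilt Q) d M := by
  cases d with
  | zero => exact ⟨h, hM⟩
  | succ d =>
    obtain ⟨B, A, f, g, hs, hA, hB⟩ := lemmaA k d M h
    exact ⟨B, A, f, g, hs, ⟨hA, Filt.ext hs (lemmaB k d B hB) hM⟩, hB⟩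

end QH5
end QHPaper

namespace QHPaper
open CategoryTheory Abelian

section QH6
variable {S : Type} [Ring S] {Λ : Type} [Fintype Λ] [PartialOrder Λ] {Q : QHData S Λ}
variable {A B C M X Y : Type} [AddCommGroup A] [Module S A] [AddCommGroup B] [Module S B]
  [AddCommGroup C] [Module S C] [AddCommGroup M] [Module S M]
  [AddCommGroup X] [Module S X] [AddCommGroup Y] [Module S Y]

variable (S) in
/-- finite projective dimension -/
def Pdf (M : Type) [AddCommGroup M] [Module S M] : Prop :=
  ∃ n, HasProjectiveDimensionLT (mc S M) (n + 1)

theorem Pdf.zero [Subsingleton M] : Pdf S M := by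
  have : HasProjectiveDimensionLT (mc S M) 0 :=
    (ModuleCat.isZero_of_subsingleton (mc S M)).hasProjectiveDimensionLT_zero
  exact ⟨0, hasProjectiveDimensionLT_of_ge _ 0 1 (by simp)⟩

theorem Pdf.proj [Module.Projective S M] : Pdf S M := by
  have : Projective (mc S M) := (IsProjective.iff_projective M).1 inferInstance
  exact ⟨0, inferInstance⟩

variable {f : A →ₗ[S] B} {g : B →ₗ[S] C}

theorem Pdf.mid (h : SES f g) (hA : Pdf S A) (hC : Pdf S C) : Pdf S B := by
  obtain ⟨a, ha⟩ := hA
  obtain ⟨c, hc⟩ := hC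
  exact ⟨max a c, h.se.hasProjectiveDimensionLT_X₂ _
    (hasProjectiveDimensionLT_of_ge _ (a+1) _ (by simp))
    (hasProjectiveDimensionLT_of_ge _ (c+1) _ (by simp))⟩

theorem Pdf.right (h : SES f g) (hA : Pdf S A) (hB : Pdf S B) : Pdf S C := by
  obtain ⟨a, ha⟩ := hA
  obtain ⟨b, hb⟩ := hB
  exact ⟨max a b + 1, h.se.hasProjectiveDimensionLT_X₃ _
    (hasProjectiveDimensionLT_of_ge _ (a+1) _ (by simp))
    (hasProjectiveDimensionLT_of_ge _ (b+1) _ (by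
      have := le_max_right a b; omega))⟩

theorem Pdf.filt {p : Λ → Prop} (hA : Filt Q.std p A) (h : ∀ l, p l → Pdf S (Q.std l)) :
    Pdf S A := by
  induction hA with
  | zero => exact Pdf.zero
  | step i hi f g hs _ ih => exact Pdf.mid hs ih (h i hi)

theorem Pdf.std (l : Λ) : Pdf S (Q.std l) := by
  induction l using WellFoundedGT.induction with
  | ind l ih =>
    obtain ⟨K, g, hs, hK⟩ := std_pres Q l
    exact Pdf.right hs (Pdf.filt hK (fun m hm => ih m hm)) Pdf.proj

theorem Pdf.simple [IsArtinianRing S] [IsNoetherianRing S] (l : Λ) : Pdf S (Q.L l) := by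
  induction l using WellFoundedLT.induction with
  | ind l ih =>
    obtain ⟨_, τ, _, hτ, _, hf⟩ := std_top Q l
    refine Pdf.right (SES.of_ker hτ) ?_ (Pdf.std l)
    refine fl_induct Q (M := LinearMap.ker τ)
      (fun Z _ _ => (∀ ν, Fac Q ν Z → ν < l) → Pdf S Z) ?_ ?_ ?_
    · intro Z _ _ _ _
      exact Pdf.zero
    · intro A B _ _ _ _ m f g h hA hB
      exact Pdf.mid h (hA (fun ν hν => hB ν (hν.inj f h.inj)))
        (ih m (hB m ((Fac.self m).surj g h.surj)))
    · intro ν hν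
      refine lt_of_le_of_ne (hf ν (hν.inj _ (Submodule.injective_subtype _))) ?_
      rintro rfl
      exact std_mult τ hτ hν

theorem Pdf.all (Q : QHData S Λ) [IsArtinianRing S] [IsNoetherianRing S] [Module.Finite S M] : Pdf S M := by
  refine fl_induct Q (M := M) (fun Z _ _ => Pdf S Z) ?_ ?_
  · intro Z _ _ _
    exact Pdf.zero
  · intro A B _ _ _ _ m f g h hA
    exact Pdf.mid h hA (Pdf.simple m)

theorem proj_std [IsArtinianRing S] [IsNoetherianRing S] [Module.Finite S M]
    [Module.Projective S M] : Std Q M := by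
  have key : ∀ (N : Submodule S M) (X : Type) [AddCommGroup X] [Module S X]
      [Module.Projective S X] (e : X →ₗ[S] M),
      Function.Injective e → LinearMap.range e = N → Std Q X := by
    intro N
    induction N using WellFoundedLT.induction with
    | ind N ih =>
      intro X _ _ _ e he hN
      rcases subsingleton_or_nontrivial X with hX | hX
      · exact .zero
      · have : IsNoetherian S X := isNoetherian_of_injective e he
        obtain ⟨l, g, hg⟩ := exists_L_quot Q (M := X)
        obtain ⟨π, hπ, hcov⟩ := P_cov Q l
        obtain ⟨φ, hφ⟩ := Module.projective_lifting_property π g hπ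
        have hφ' : ∀ x, π (φ x) = g x := fun x => LinearMap.congr_fun hφ x
        have hφs : Function.Surjective φ := by
          rw [← LinearMap.range_eq_top]
          by_contra hne
          obtain ⟨y, hy⟩ := exists_ne (0 : Q.L l)
          obtain ⟨x, rfl⟩ := hg y
          apply hy
          rw [← hφ']
          exact hcov _ hne ⟨x, rfl⟩
        obtain ⟨s, hs⟩ := Module.projective_lifting_property φ LinearMap.id hφs
        have hs' : ∀ x, φ (s x) = x := fun x => LinearMap.congr_fun hs x
        have : Module.Projective S (LinearMap.ker φ) :=
          Module.Projective.of_split (LinearMap.ker φ).subtype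
            ((LinearMap.id - s ∘ₗ φ).codRestrict (LinearMap.ker φ) (fun x => by
              simp [hs'])) (by
              ext x
              have : φ x.1 = 0 := x.2
              simp [this])
        have hP : Std Q (Q.P l) := by
          obtain ⟨n, f, g, h, _⟩ := Q.projFilt l
          exact Filt.iff_fin.2 ⟨n, f, g, h⟩
        refine Filt.ext (SES.of_ker hφs) ?_ hP
        refine ih (LinearMap.range (e ∘ₗ (LinearMap.ker φ).subtype)) ?_ _ _
          (he.comp (Submodule.injective_subtype _)) rfl
        rw [← hN]
        refine lt_of_le_of_ne (LinearMap.range_comp_le_range _ _) ?_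
        intro heq
        obtain ⟨y, hy⟩ := exists_ne (0 : Q.L l)
        obtain ⟨x, rfl⟩ := hg y
        have : e x ∈ LinearMap.range (e ∘ₗ (LinearMap.ker φ).subtype) := by
          rw [heq]; exact ⟨x, rfl⟩
        obtain ⟨z, hz⟩ := this
        have := he hz
        apply hy
        rw [← hφ', ← this, show φ ((LinearMap.ker φ).subtype z) = 0 from z.2, map_zero]
  exact key ⊤ M LinearMap.id (fun _ _ h => h) LinearMap.range_id

theorem res_of_pd [IsArtinianRing S] [IsNoetherianRing S] (n : ℕ) :
    ∀ (M : ModuleCat.{0} S) [Module.Finite S M], HasProjectiveDimensionLT M (n + 1) →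
      Res (Std Q) n M := by
  induction n with
  | zero =>
    intro M _ h
    have h1 : Projective M := projective_iff_hasProjectiveDimensionLT_one.2 h
    have : Module.Projective S M := (IsProjective.iff_projective (R := S) M).2 h1
    exact proj_std
  | succ n ih =>
    intro M _ h
    obtain ⟨m, g, hg⟩ := Module.Finite.exists_fin' S M
    have hs := SES.of_ker hg
    refine ⟨mc S (LinearMap.ker g), mc S (Fin m → S), _, g, hs, proj_std, ?_⟩
    have hp : Projective (mc S (Fin m → S)) := (IsProjective.iff_projective (Fin m → S)).1 inferInstance
    exact ih (mc S (LinearMap.ker g)) ((hs.se.hasProjectiveDimensionLT_X₃_iff n hp).1 h)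

theorem Std.iff (M : ModuleCat.{0} S) : Std Q M ↔ InStdFilt S Q M := Filt.iff_fin
theorem Cos.iff (M : ModuleCat.{0} S) : Cos Q M ↔ InCostdFilt S Q M := Filt.iff_fin

theorem main_aux (k : Type) [Field k] [Algebra k S] [FiniteDimensional k S] (l : Λ) :
    (∃ d, TiltResLE S Q (Q.costd l) d) ∧
    ∀ d, TiltResLE S Q (Q.costd l) d ↔ WfdLE S Q (Q.costd l) d := by
  have : IsNoetherianRing S := IsNoetherianRing.of_finite k S
  have : IsArtinianRing S := IsArtinianRing.of_finite k S
  have hc : Cos Q (Q.costd l) := Filt.single l trivial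
  have key : ∀ d, Res (Std Q) d (Q.costd l) → TiltResLE S Q (Q.costd l) d := by
    intro d h
    obtain ⟨N, f, h1, h2, h3⟩ := RRes.toSeq _ d _ (Res.toR _ d _ (res_tilt k d _ hc h))
    exact ⟨N, f, h1, h2, fun i => ⟨(Std.iff _).1 (h3 i).1, (Cos.iff _).1 (h3 i).2⟩⟩
  refine ⟨?_, fun d => ⟨?_, ?_⟩⟩
  · have := finCostd (Q := Q) k l
    obtain ⟨n, hn⟩ := Pdf.all Q (M := Q.costd l)
    exact ⟨n, key n (res_of_pd n _ hn)⟩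
  · rintro ⟨N, f, h1, h2, h3⟩
    exact ⟨N, f, h1, h2, fun i => (h3 i).1⟩
  · rintro ⟨N, f, h1, h2, h3⟩
    apply key
    rw [← h2]
    exact Res.of_seq (Std Q) (fun M M' e h => Filt.equiv e h) d N f h1
      (fun i => (Std.iff _).2 (h3 i))

end QH6
end QHPaper

open QHPaper in
/-- Let `S` be a quasi-hereditary algebra and `lam ∈ Λ⁺`. The least length
`d` of a tilting resolution `0 → T_d → ⋯ → T_1 → T_0 → ∇(lam) → 0` of the costandard
module `∇(lam)` (with every `T_i` a tilting module) exists and equals the Δ-filtration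
dimension `wfd(∇(lam))`. -/
theorem stmt10 (k S Λ : Type) [Field k] [Ring S] [Algebra k S] [FiniteDimensional k S]
    [Fintype Λ] [PartialOrder Λ]
    (QH : QHData S Λ) (lam : Λ) :
    (∃ d : ℕ, TiltResLE S QH (QH.costd lam) d) ∧
    sInf {d : ℕ | TiltResLE S QH (QH.costd lam) d} = wfd S QH (QH.costd lam) := by
  obtain ⟨h1, h2⟩ := main_aux (Q := QH) k lam
  refine ⟨h1, ?_⟩
  unfold wfd
  congr 1
  ext d
  exact h2 d
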